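/- For every prime power q and every integer n ≥ 25, for every a, b in F_q there exists a nonzero element ξ in F_{q^n} such that Tr(ξ) = a, Tr(ξ^{-1}) = b, and ξ + ξ^{-1} is a primitive element of F_{q^n}. -/

import Mathlib

/-!
Vinogradov's weights `μ(d) / φ(d)` on the multiplicative characters of order `d` detect primitive
elements, and additive characters of `F_q` detect the two trace conditions. If no `ξ` exists, a
combination of the sums `∑ χ (x + x⁻¹) ψ (u x + v x⁻¹)` with total weight `2 ^ ω(q ^ n - 1) * q ^ 2`
vanishes, although its trivial term is `q ^ n + O(1)`; as the other terms are at most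
`4 * q ^ (n / 2)`, this fails once `4 * 2 ^ ω(q ^ n - 1) * q ^ 2 ≤ q ^ (n / 2)`, which holds for
`n ≥ 25`.

The bound `4 * q ^ (n / 2)` is Weil's. Put `Q = q ^ n`. Each sum is the case `k = 1` of a power sum
`-∑ ρ i ^ k` over the degree `k` extension, for at most four reciprocal roots `ρ i` of a polynomial
`L`-function, so `‖ρ i‖ ≤ √Q` follows from a bound `O(Q ^ (k / 2))` for large even `k`. That bound
comes from counting points on the Kummer–Artin–Schreier curves by the Stepanov–Bombieri method: a
nonzero function with a pole of controlled order at a single point vanishes at all rational points,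
which bounds their number from above; summing the upper bounds over all twists gives the lower
bound.
-/

section PoleBasis

/-- A `K`-basis of an algebra `A` whose elements have pairwise distinct pole orders at one place:
the valuation `v` is the absolute value at that place, written multiplicatively, so that `γ ^ n` is
the value of a function with a pole of order `n`. It carries the part of the Riemann-Roch theory of
a curve with one point at infinity that is needed to count its points. -/
structure PoleBasis (ι K A Γ : Type*) [Field K] [CommRing A] [Algebra K A]
    [LinearOrderedCommGroupWithZero Γ] where
  basis : Module.Basis ι K A
  v : Valuation A Γ
  isTrivialOn : v.IsTrivialOn K
  γ : Γ
  one_lt_γ : 1 < γ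
  order : ι → ℕ
  order_injective : Function.Injective order
  v_basis (i : ι) : v (basis i) = γ ^ order i

theorem exists_valuation_sum_eq {A Γ κ : Type*} [CommRing A] [LinearOrderedCommGroupWithZero Γ]
    (v : Valuation A Γ) {t : Finset κ} (ht : t.Nonempty) {f : κ → A}
    (hf : Set.InjOn (fun i ↦ v (f i)) t) :
    ∃ i ∈ t, (∀ j ∈ t, v (f j) ≤ v (f i)) ∧ v (∑ j ∈ t, f j) = v (f i) := by
  classical
  obtain ⟨i, hi, hmax⟩ := t.exists_max_image (fun i ↦ v (f i)) ht
  refine ⟨i, hi, hmax, v.map_sum_eq_of_lt hi fun j hj ↦ ?_⟩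
  obtain ⟨hjt, hji⟩ := Finset.mem_sdiff.1 hj
  exact (hmax j hjt).lt_of_ne fun h ↦ hji (Finset.mem_singleton.2 (hf hjt hi h))

namespace PoleBasis

variable {ι K A Γ : Type*} [Field K] [CommRing A] [Algebra K A]
  [LinearOrderedCommGroupWithZero Γ] (P : PoleBasis ι K A Γ)

theorem γ_ne_zero : P.γ ≠ 0 :=
  (zero_lt_one.trans P.one_lt_γ).ne'

theorem v_smul {c : K} (hc : c ≠ 0) (a : A) : P.v (c • a) = P.v a := by
  have := P.isTrivialOn
  rw [Algebra.smul_def, map_mul, Valuation.IsTrivialOn.eq_one c hc, one_mul]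

theorem v_smul_le (c : K) (a : A) : P.v (c • a) ≤ P.v a := by
  rcases eq_or_ne c 0 with rfl | hc
  · simp
  · exact (P.v_smul hc a).le

theorem exists_v_eq {a : A} (ha : a ≠ 0) :
    ∃ i, (∀ j ∈ (P.basis.repr a).support, P.order j ≤ P.order i) ∧ P.v a = P.γ ^ P.order i := by
  have hterm : ∀ j ∈ (P.basis.repr a).support,
      P.v (P.basis.repr a j • P.basis j) = P.γ ^ P.order j := fun j hj ↦ by
    rw [P.v_smul (Finsupp.mem_support_iff.1 hj), P.v_basis]
  obtain ⟨i, hi, hmax, hsum⟩ := exists_valuation_sum_eq P.v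
    (Finsupp.support_nonempty_iff.2 <| (map_ne_zero_iff _ P.basis.repr.injective).2 ha)
    (f := fun j ↦ P.basis.repr a j • P.basis j) fun j hj k hk hjk ↦ by
      simp only [hterm j hj, hterm k hk] at hjk
      exact P.order_injective (pow_right_injective₀ (zero_lt_one.trans P.one_lt_γ)
        P.one_lt_γ.ne' hjk)
  refine ⟨i, fun j hj ↦ ?_, ?_⟩
  · have := hmax j hj
    rwa [hterm j hj, hterm i hi, pow_le_pow_iff_right₀ P.one_lt_γ] at this
  · conv_lhs => rw [← P.basis.linearCombination_repr a, Finsupp.linearCombination_apply]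
    exact hsum.trans (hterm i hi)

theorem v_ne_zero {a : A} (ha : a ≠ 0) : P.v a ≠ 0 := by
  obtain ⟨i, -, hi⟩ := P.exists_v_eq ha
  exact hi ▸ pow_ne_zero _ P.γ_ne_zero

/-- The indices of the basis elements with a pole of order at most `B`. -/
noncomputable def indices (B : ℕ) : Finset ι :=
  (Finset.Iic B).preimage P.order P.order_injective.injOn

@[simp]
theorem mem_indices {B : ℕ} {i : ι} : i ∈ P.indices B ↔ P.order i ≤ B := by
  simp [indices]

theorem card_indices_add_le (B D : ℕ) : (P.indices (B + D)).card ≤ (P.indices B).card + D := by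
  classical
  have hsub : P.indices (B + D) \ P.indices B ⊆
      (Finset.Ioc B (B + D)).preimage P.order P.order_injective.injOn := fun i ↦ by
    simp [and_comm]
  calc (P.indices (B + D)).card
      ≤ (P.indices (B + D) \ P.indices B).card + (P.indices B).card :=
        Finset.card_le_card_sdiff_add_card
    _ ≤ D + (P.indices B).card := by
        gcongr
        calc _ ≤ _ := Finset.card_le_card hsub
          _ ≤ (Finset.Ioc B (B + D)).card :=
            Finset.card_le_card_of_injOn P.order (by simp [Set.MapsTo]) P.order_injective.injOn
          _ = D := by simp
    _ = (P.indices B).card + D := add_comm _ _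

theorem card_indices_le (B : ℕ) : (P.indices B).card ≤ B + 1 := by
  simpa using Finset.card_le_card_of_injOn (s := P.indices B) (t := Finset.Iic B) P.order
    (by simp [Set.MapsTo]) P.order_injective.injOn

theorem le_card_indices_add {G : ℕ} (hG : ∀ n, G ≤ n → n ∈ Set.range P.order) (B : ℕ) :
    B + 1 ≤ (P.indices B).card + G := by
  classical
  have hsub : Finset.Iic B ⊆ (P.indices B).image P.order ∪ Finset.range G := fun n hn ↦ by
    rcases lt_or_ge n G with h | h
    · simp [h]
    · obtain ⟨i, rfl⟩ := hG n h
      exact Finset.mem_union_left _ (Finset.mem_image_of_mem _ (by simpa using hn))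
  calc B + 1 = (Finset.Iic B).card := by simp
    _ ≤ _ := Finset.card_le_card hsub
    _ ≤ _ := Finset.card_union_le _ _
    _ ≤ (P.indices B).card + G := by simpa using Finset.card_image_le

/-- The Riemann-Roch space of the elements with a pole of order at most `B`. -/
def poleLE (B : ℕ) : Submodule K A where
  carrier := {a | P.v a ≤ P.γ ^ B}
  zero_mem' := by simp
  add_mem' ha hb := P.v.map_add_le ha hb
  smul_mem' c a ha := (P.v_smul_le c a).trans ha

theorem mem_poleLE {B : ℕ} {a : A} : a ∈ P.poleLE B ↔ P.v a ≤ P.γ ^ B :=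
  Iff.rfl

theorem basis_mem_poleLE {B : ℕ} {i : ι} (hi : i ∈ P.indices B) : P.basis i ∈ P.poleLE B := by
  rw [mem_poleLE, v_basis]
  exact pow_le_pow_right₀ P.one_lt_γ.le (P.mem_indices.1 hi)

theorem poleLE_eq_span (B : ℕ) :
    P.poleLE B = Submodule.span K (P.basis '' (P.indices B : Set ι)) := by
  refine le_antisymm (fun a ha ↦ ?_) (Submodule.span_le.2 ?_)
  · rcases eq_or_ne a 0 with rfl | ha0
    · exact zero_mem _
    obtain ⟨i, hmax, hi⟩ := P.exists_v_eq ha0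
    rw [mem_poleLE, hi, pow_le_pow_iff_right₀ P.one_lt_γ] at ha
    exact P.basis.mem_span_image.2 fun j hj ↦ P.mem_indices.2 ((hmax j hj).trans ha)
  · rintro _ ⟨i, hi, rfl⟩
    exact P.basis_mem_poleLE hi

instance (B : ℕ) : FiniteDimensional K (P.poleLE B) := by
  rw [poleLE_eq_span]
  exact FiniteDimensional.span_of_finite K ((Finset.finite_toSet _).image _)

theorem finrank_poleLE (B : ℕ) : Module.finrank K (P.poleLE B) = (P.indices B).card := by
  rw [poleLE_eq_span, Set.image_eq_range, ← Fintype.card_coe]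
  exact finrank_span_eq_card (P.basis.linearIndependent.comp _ Subtype.val_injective)

theorem poleLE_mono : Monotone P.poleLE := fun _ _ h _ ha ↦
  ha.trans (pow_le_pow_right₀ P.one_lt_γ.le h)

theorem exists_mem_poleLE (a : A) : ∃ B, a ∈ P.poleLE B := by
  rcases eq_or_ne a 0 with rfl | ha
  · exact ⟨0, zero_mem _⟩
  · obtain ⟨i, -, hi⟩ := P.exists_v_eq ha
    exact ⟨P.order i, hi.le⟩

theorem mul_mem_poleLE {a b : A} {x y : ℕ} (ha : a ∈ P.poleLE x) (hb : b ∈ P.poleLE y) :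
    a * b ∈ P.poleLE (x + y) := by
  rw [mem_poleLE, map_mul, pow_add]
  exact mul_le_mul' ha hb

theorem pow_mem_poleLE {a : A} {x : ℕ} (ha : a ∈ P.poleLE x) (k : ℕ) :
    a ^ k ∈ P.poleLE (x * k) := by
  rw [mem_poleLE, map_pow, pow_mul]
  exact pow_le_pow_left₀ zero_le ha k

theorem finrank_map_mk_poleLE_le {h : A} (h0 : h ≠ 0) {D : ℕ} (hD : h ∈ P.poleLE D) (C : ℕ) :
    Module.finrank K ((P.poleLE (C + D)).map (Ideal.Quotient.mkₐ K (Ideal.span {h})).toLinearMap)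
      ≤ D := by
  set π := (Ideal.Quotient.mkₐ K (Ideal.span {h})).toLinearMap.domRestrict (P.poleLE (C + D))
  have hker : Module.finrank K (P.poleLE C) ≤ Module.finrank K (LinearMap.ker π) := by
    let mulH : P.poleLE C →ₗ[K] LinearMap.ker π :=
      ((LinearMap.mulRight K h).restrict fun _ hx ↦ P.mul_mem_poleLE hx hD).codRestrict _ fun x ↦
        Ideal.Quotient.eq_zero_iff_mem.2 (Ideal.mul_mem_left _ _ (Ideal.mem_span_singleton_self h))
    refine LinearMap.finrank_le_finrank_of_injective (f := mulH)
      ((injective_iff_map_eq_zero _).2 fun x hx ↦ ?_)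
    have hxh : P.v (x * h) = 0 := by
      rw [show (x * h : A) = 0 from congrArg (fun z ↦ z.1.1) hx, map_zero]
    rw [map_mul, mul_eq_zero, or_iff_left (P.v_ne_zero h0)] at hxh
    by_contra hx0
    exact P.v_ne_zero (fun h ↦ hx0 (Subtype.ext h)) hxh
  have hrank := LinearMap.finrank_range_add_finrank_ker π
  have hcard := P.card_indices_add_le C D
  rw [finrank_poleLE] at hrank hker
  rw [← LinearMap.range_domRestrict]
  change Module.finrank K (LinearMap.range π) ≤ D
  omega

theorem rank_quotient_span_singleton_le {h : A} (h0 : h ≠ 0) {D : ℕ} (hD : h ∈ P.poleLE D) :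
    Module.rank K (A ⧸ Ideal.span {h}) ≤ D := by
  refine rank_le fun s hs ↦ ?_
  choose lift hlift using Ideal.Quotient.mk_surjective (I := Ideal.span {h})
  choose B hB using P.exists_mem_poleLE
  have hmem : ∀ x ∈ s, x ∈ (P.poleLE (s.sup (B ∘ lift) + D)).map
      (Ideal.Quotient.mkₐ K (Ideal.span {h})).toLinearMap := fun x hx ↦
    ⟨lift x, P.poleLE_mono ((Finset.le_sup (f := B ∘ lift) hx).trans (Nat.le_add_right _ _))
      (hB _), hlift x⟩
  calc s.card = Module.finrank K (Submodule.span K (s : Set (A ⧸ Ideal.span {h}))) :=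
        (finrank_span_finset_eq_card hs).symm
    _ ≤ _ := Submodule.finrank_mono (Submodule.span_le.2 hmem)
    _ ≤ D := P.finrank_map_mk_poleLE_le h0 hD _

theorem card_zeros_le {h : A} (h0 : h ≠ 0) {D : ℕ} (hD : h ∈ P.poleLE D)
    {S : Finset (A →ₐ[K] K)} (hS : ∀ φ ∈ S, φ h = 0) : S.card ≤ D := by
  have hrank := P.rank_quotient_span_singleton_le h0 hD
  have : Module.Finite K (A ⧸ Ideal.span {h}) :=
    Module.rank_lt_aleph0_iff.1 (hrank.trans_lt (Cardinal.natCast_lt_aleph0))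
  let descend (φ : S) : (A ⧸ Ideal.span {h}) →ₐ[K] K :=
    Ideal.Quotient.liftₐ _ φ.1 fun _ ha ↦
      (Ideal.span_singleton_le_iff_mem (RingHom.ker φ.1)).2 (hS _ φ.2) ha
  have hinj : Function.Injective descend := fun φ ψ hφψ ↦ Subtype.ext <| AlgHom.ext fun a ↦
    DFunLike.congr_fun hφψ (Ideal.Quotient.mk _ a)
  calc S.card = Nat.card S := by simp
    _ ≤ Nat.card ((A ⧸ Ideal.span {h}) →ₐ[K] K) := Nat.card_le_card_of_injective _ hinj
    _ ≤ Module.finrank K (A ⧸ Ideal.span {h}) := card_algHom_le_finrank _ _ _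
    _ ≤ D := Module.finrank_le_of_rank_le hrank

theorem exists_relation {B l r : ℕ}
    (hcard : (P.indices (B + l * r)).card < (P.indices B).card * (P.indices l).card) :
    ∃ c : ι → ι → K, (∃ i ∈ P.indices B, ∃ j ∈ P.indices l, c i j ≠ 0) ∧
      ∑ i ∈ P.indices B, ∑ j ∈ P.indices l, c i j • (P.basis i * P.basis j ^ r) = 0 := by
  have hdep : ¬ LinearIndepOn K (fun x : ι × ι ↦ P.basis x.1 * P.basis x.2 ^ r)
      (P.indices B ×ˢ P.indices l : Finset (ι × ι)) := fun hind ↦ by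
    have hmem : ∀ x : (P.indices B ×ˢ P.indices l : Finset (ι × ι)),
        P.basis x.1.1 * P.basis x.1.2 ^ r ∈ P.poleLE (B + l * r) := fun x ↦ by
      obtain ⟨hi, hj⟩ := Finset.mem_product.1 x.2
      exact P.mul_mem_poleLE (P.basis_mem_poleLE hi)
        (P.pow_mem_poleLE (P.basis_mem_poleLE hj) r)
    have hmemInd : LinearIndependent K fun x ↦ (⟨_, hmem x⟩ : P.poleLE (B + l * r)) :=
      .of_comp (P.poleLE (B + l * r)).subtype hind
    have := hmemInd.fintype_card_le_finrank
    rw [Fintype.card_coe, Finset.card_product, finrank_poleLE] at this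
    exact this.not_gt hcard
  obtain ⟨c, hc, x, hx, hcx⟩ := not_linearIndepOn_finset_iff.1 hdep
  obtain ⟨hi, hj⟩ := Finset.mem_product.1 hx
  exact ⟨fun i j ↦ c (i, j), ⟨x.1, hi, x.2, hj, hcx⟩, by rwa [Finset.sum_product] at hc⟩

theorem sum_mul_basis_pow_ne_zero {t : Finset ι} (ht : t.Nonempty) {l r : ℕ} (hlr : l < r)
    {a : ι → A} (ha0 : ∀ i ∈ t, a i ≠ 0) (ha : ∀ i ∈ t, a i ∈ P.poleLE l) :
    ∑ i ∈ t, a i * P.basis i ^ r ≠ 0 := by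
  have hlow : ∀ i ∈ t, ∃ w < r, P.v (a i) = P.γ ^ w := fun i hi ↦ by
    obtain ⟨k, -, hk⟩ := P.exists_v_eq (ha0 i hi)
    refine ⟨_, lt_of_le_of_lt ?_ hlr, hk⟩
    simpa only [mem_poleLE, hk, pow_le_pow_iff_right₀ P.one_lt_γ] using ha i hi
  choose! w hwr hw using hlow
  have hterm : ∀ i ∈ t, P.v (a i * P.basis i ^ r) = P.γ ^ (w i + r * P.order i) := fun i hi ↦ by
    rw [map_mul, map_pow, hw i hi, P.v_basis, ← pow_mul, ← pow_add, mul_comm r]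
  obtain ⟨i, hi, -, hsum⟩ := exists_valuation_sum_eq P.v ht
    (f := fun i ↦ a i * P.basis i ^ r) fun i hi j hj hij ↦ by
      simp only [hterm i hi, hterm j hj] at hij
      have hdiv := congrArg (· / r) (pow_right_injective₀ (zero_lt_one.trans P.one_lt_γ)
        P.one_lt_γ.ne' hij)
      have hr : 0 < r := by omega
      exact P.order_injective (by
        simpa [Nat.add_mul_div_left _ _ hr, Nat.div_eq_of_lt (hwr i hi),
          Nat.div_eq_of_lt (hwr j hj)] using hdiv)
  rw [hterm i hi] at hsum
  intro hzero
  rw [hzero, map_zero] at hsum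
  exact pow_ne_zero _ P.γ_ne_zero hsum.symm

theorem sum_sum_smul_mul_basis_pow_ne_zero {B l r : ℕ} (hlr : l < r) {c : ι → ι → K}
    (hc : ∃ i ∈ P.indices B, ∃ j ∈ P.indices l, c i j ≠ 0) :
    ∑ i ∈ P.indices B, (∑ j ∈ P.indices l, c i j • P.basis j) * P.basis i ^ r ≠ 0 := by
  classical
  set a : ι → A := fun i ↦ ∑ j ∈ P.indices l, c i j • P.basis j
  have ha : ∃ i ∈ P.indices B, a i ≠ 0 := by
    obtain ⟨i, hi, j, hj, hcij⟩ := hc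
    exact ⟨i, hi, fun h ↦ hcij (linearIndependent_iff'.1 P.basis.linearIndependent _ _ h j hj)⟩
  rw [← Finset.sum_filter_of_ne (p := fun i ↦ a i ≠ 0) fun i _ h ↦ left_ne_zero_of_mul h]
  refine P.sum_mul_basis_pow_ne_zero (Finset.filter_nonempty_iff.2 ha) hlr
    (fun i hi ↦ (Finset.mem_filter.1 hi).2) fun i _ ↦ sum_mem fun j hj ↦ ?_
  exact Submodule.smul_mem _ _ (P.basis_mem_poleLE hj)

theorem algHom_sum_mul_pow_eq_zero [Fintype K] {p k : ℕ} [ExpChar K p]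
    (hK : Fintype.card K = (p ^ k) ^ 2) {κ : Type*} {s t : Finset κ} {c : κ → κ → K} {m : κ → A}
    (hrel : ∑ i ∈ s, ∑ j ∈ t, c i j • (m i * m j ^ p ^ k) = 0) (φ : A →ₐ[K] K) :
    φ (∑ i ∈ s, (∑ j ∈ t, c i j ^ p ^ k • m j) * m i ^ p ^ k) = 0 := by
  have hfrob (x : K) : (x ^ p ^ k) ^ p ^ k = x := by
    rw [← pow_mul, ← pow_two, ← hK, FiniteField.pow_card]
  refine eq_zero_of_pow_eq_zero (n := p ^ k) ?_
  calc _ = ∑ i ∈ s, ∑ j ∈ t, c i j * (φ (m i) * φ (m j) ^ p ^ k) := by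
        simp only [map_sum, map_mul, map_smul, map_pow, smul_eq_mul, sum_pow_char_pow, mul_pow,
          hfrob, Finset.sum_mul, mul_assoc, mul_comm (φ (m _))]
    _ = φ (∑ i ∈ s, ∑ j ∈ t, c i j • (m i * m j ^ p ^ k)) := by
        simp only [map_sum, map_mul, map_smul, map_pow, smul_eq_mul]
    _ = 0 := by rw [hrel, map_zero]

/- Bombieri's argument. Over the field with `r ^ 2` elements a relation `∑ cᵢⱼ mᵢ mⱼ ^ r = 0` is, at
every rational point, the `r`-th power of `h = ∑ cᵢⱼ ^ r mⱼ mᵢ ^ r`. So `h` vanishes at all of them,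
although it is not zero and has a pole of order only about `r ^ 2`. -/
theorem card_algHom_le [Fintype K] {p k G : ℕ} [ExpChar K p]
    (hK : Fintype.card K = (p ^ k) ^ 2) (hG : ∀ n, G ≤ n → n ∈ Set.range P.order)
    (hGr : (G + 2) ^ 2 < p ^ k) (S : Finset (A →ₐ[K] K)) :
    S.card ≤ (p ^ k) ^ 2 + (2 * G + 1) * p ^ k := by
  obtain ⟨l, hl⟩ : ∃ l, p ^ k = l + 1 := Nat.exists_eq_succ_of_ne_zero (by omega)
  have hcard : (P.indices (p ^ k + 2 * G + l * p ^ k)).card <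
      (P.indices (p ^ k + 2 * G)).card * (P.indices l).card := by
    have hupper := P.card_indices_le (p ^ k + 2 * G + l * p ^ k)
    have hB := P.le_card_indices_add hG (p ^ k + 2 * G)
    have hlower := P.le_card_indices_add hG l
    obtain ⟨u, hu⟩ : ∃ u, p ^ k = G + u := Nat.exists_eq_add_of_le (by nlinarith)
    have hprod := Nat.mul_le_mul (show p ^ k + G + 1 ≤ (P.indices (p ^ k + 2 * G)).card by omega)
      (show u ≤ (P.indices l).card by omega)
    nlinarith [hprod]
  obtain ⟨c, hc0, hrel⟩ := P.exists_relation hcard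
  set h := ∑ i ∈ P.indices (p ^ k + 2 * G),
    (∑ j ∈ P.indices l, c i j ^ p ^ k • P.basis j) * P.basis i ^ p ^ k
  have h0 : h ≠ 0 := P.sum_sum_smul_mul_basis_pow_ne_zero (hl ▸ l.lt_succ_self) <| by
    obtain ⟨i, hi, j, hj, hcij⟩ := hc0
    exact ⟨i, hi, j, hj, pow_ne_zero _ hcij⟩
  have hmem : h ∈ P.poleLE (l + (p ^ k + 2 * G) * p ^ k) := sum_mem fun i hi ↦
    P.mul_mem_poleLE (sum_mem fun j hj ↦ Submodule.smul_mem _ _ (P.basis_mem_poleLE hj))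
      (P.pow_mem_poleLE (P.basis_mem_poleLE hi) _)
  calc S.card ≤ l + (p ^ k + 2 * G) * p ^ k :=
        P.card_zeros_le h0 hmem fun φ _ ↦ algHom_sum_mul_pow_eq_zero hK hrel φ
    _ ≤ (p ^ k) ^ 2 + (2 * G + 1) * p ^ k := by nlinarith

end PoleBasis

end PoleBasis

section OnePointCurve

open Polynomial

theorem exists_valuationSubring_one_lt {K L : Type*} [Field K] [Field L] [Algebra K L] {x : L}
    (hx : Transcendental K x) :
    ∃ V : ValuationSubring L, V.valuation.IsTrivialOn K ∧ 1 < V.valuation x := by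
  have hx_int : x ∉ (integralClosure K L).toSubring := fun h ↦ hx (IsIntegral.isAlgebraic h)
  obtain ⟨V, hKV, hxV⟩ := Subring.exists_le_valuationSubring_of_isIntegrallyClosedIn hx_int
  have hle (c : K) : V.valuation (algebraMap K L c) ≤ 1 :=
    (V.valuation_le_one_iff _).2 (hKV (isIntegral_algebraMap (x := c)))
  refine ⟨V, ⟨fun c hc ↦ (hle c).antisymm ?_⟩,
    not_le.1 fun h ↦ hxV ((V.valuation_le_one_iff x).1 h)⟩
  have hinv := hle c⁻¹
  rw [map_inv₀, map_inv₀] at hinv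
  exact (inv_le_one₀ (zero_lt_iff.2 (by simpa using hc))).1 hinv

theorem valuation_pow_eq_of_pow_eq_mul_add {L Γ : Type*} [Field L]
    [LinearOrderedCommGroupWithZero Γ] (v : Valuation L Γ) {n : ℕ} (hn : n ≠ 0) {z a b : L}
    (hz : z ^ (n + 1) = a * z + b) (hab : v a ^ (n + 1) < v b ^ n) : v z ^ (n + 1) = v b := by
  suffices hlt : v (a * z) < v b by rw [← map_pow, hz, v.map_add_eq_of_lt_right hlt]
  by_contra! hle
  have hzn : v z ^ n ≤ v a := by
    rcases eq_or_ne (v z) 0 with h0 | h0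
    · simp [h0, hn]
    · refine (mul_le_mul_iff_left₀ (zero_lt_iff.2 h0)).1 ?_
      rw [← pow_succ, ← map_pow, hz, ← map_mul]
      exact v.map_add_le le_rfl hle
  refine hab.not_ge ?_
  calc v b ^ n ≤ (v a * v z) ^ n := pow_le_pow_left₀ zero_le (hle.trans (map_mul v a z).le) n
    _ = v a ^ n * v z ^ n := mul_pow _ _ _
    _ ≤ v a ^ n * v a := by gcongr
    _ = v a ^ (n + 1) := (pow_succ _ _).symm

/-- The affine curve `y ^ m = f x`, `z ^ n = g x * z + h x` over `K`, with conditions on the degrees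
which ensure that it has exactly one place at infinity, totally ramified over the `x`-line. -/
structure OnePointCurve (K : Type*) [Field K] where
  m : ℕ
  n : ℕ
  f : K[X]
  g : K[X]
  h : K[X]
  f_ne_zero : f ≠ 0
  coprime : m.Coprime n
  coprime_f : m.Coprime f.natDegree
  coprime_h : n.Coprime h.natDegree
  natDegree_lt : n * g.natDegree < (n - 1) * h.natDegree

namespace OnePointCurve

variable {K : Type*} [Field K] (C : OnePointCurve K)

theorem one_lt_n : 1 < C.n := by
  by_contra! hn
  have := C.natDegree_lt
  rw [Nat.sub_eq_zero_of_le hn] at this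
  omega

theorem n_pos : 0 < C.n := zero_lt_one.trans C.one_lt_n

theorem m_pos : 0 < C.m := by
  refine Nat.pos_of_ne_zero fun hm ↦ C.one_lt_n.ne' ?_
  simpa [hm] using C.coprime

theorem h_ne_zero : C.h ≠ 0 := by
  intro hh
  simpa [hh] using C.natDegree_lt

/-- The condition that `(x, y, z)` lies on the curve. -/
def IsPoint {B : Type*} [CommRing B] [Algebra K B] (x y z : B) : Prop :=
  y ^ C.m = aeval x C.f ∧ z ^ C.n = aeval x C.g * z + aeval x C.h

/-- The subring of the coordinate ring generated by `x` and `y`. -/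
abbrev PlaneRing : Type _ :=
  AdjoinRoot (X ^ C.m - Polynomial.C C.f : K[X][X])

/-- The equation of `z` over the ring generated by `x` and `y`. -/
noncomputable def zPoly : C.PlaneRing[X] :=
  X ^ C.n - (Polynomial.C (AdjoinRoot.of _ C.g) * X + Polynomial.C (AdjoinRoot.of _ C.h))

/-- The coordinate ring of the curve. -/
abbrev CoordRing : Type _ :=
  AdjoinRoot C.zPoly

instance : Nontrivial C.PlaneRing :=
  AdjoinRoot.nontrivial _ (by
    rw [degree_X_pow_sub_C C.m_pos]
    exact_mod_cast C.m_pos.ne')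

theorem degree_linear_lt {B : Type*} [CommRing B] (a b : B) :
    (Polynomial.C a * X + Polynomial.C b).degree < (C.n : WithBot ℕ) :=
  degree_linear_le.trans_lt (Nat.one_lt_cast.2 C.one_lt_n)

theorem zPoly_monic : C.zPoly.Monic :=
  monic_X_pow_sub (C.degree_linear_lt _ _)

theorem natDegree_zPoly : C.zPoly.natDegree = C.n :=
  natDegree_eq_of_degree_eq_some <| by
    rw [zPoly, degree_sub_eq_left_of_degree_lt, degree_X_pow]
    simpa only [degree_X_pow] using C.degree_linear_lt _ _

/-- The `K`-basis `x ^ i * y ^ j * z ^ k`, with `j < m` and `k < n`, of the coordinate ring. -/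
noncomputable def basis : Module.Basis ((ℕ × Fin C.m) × Fin C.n) K C.CoordRing :=
  ((basisMonomials K).smulTower
    ((AdjoinRoot.powerBasis' (monic_X_pow_sub_C C.f C.m_pos.ne')).basis.reindex
      (finCongr natDegree_X_pow_sub_C))).smulTower
    ((AdjoinRoot.powerBasis' C.zPoly_monic).basis.reindex (finCongr C.natDegree_zPoly))

/-- The homomorphism from the coordinate ring that evaluates functions at a point. -/
noncomputable def eval {B : Type*} [CommRing B] [Algebra K B] {x y z : B} (hp : C.IsPoint x y z) :
    C.CoordRing →ₐ[K] B :=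
  AdjoinRoot.liftAlgHom _
    (AdjoinRoot.liftAlgHom _ (aeval x) y (by simp [hp.1])) z (by simp [zPoly, hp.2])

theorem eval_basis {B : Type*} [CommRing B] [Algebra K B] {x y z : B} (hp : C.IsPoint x y z)
    (i : ℕ) (j : Fin C.m) (k : Fin C.n) :
    C.eval hp (C.basis ((i, j), k)) = x ^ i * y ^ (j : ℕ) * z ^ (k : ℕ) := by
  rw [basis, Module.Basis.smulTower_apply, Module.Basis.smulTower_apply, Algebra.smul_def,
    Algebra.smul_def]
  simp only [eval, AdjoinRoot.algebraMap_eq, coe_basisMonomials, Module.Basis.coe_reindex,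
    PowerBasis.coe_basis, AdjoinRoot.powerBasis'_gen, Function.comp_apply, map_mul, map_pow,
    AdjoinRoot.liftAlgHom_of, aeval_monomial, map_one, one_mul, AdjoinRoot.liftAlgHom_root]
  rfl

theorem eval_injective {B : Type*} [CommRing B] [Algebra K B] {x y z x' y' z' : B}
    {hp : C.IsPoint x y z} {hp' : C.IsPoint x' y' z'} (h : C.eval hp = C.eval hp') :
    x = x' ∧ y = y' ∧ z = z' := by
  refine ⟨?_, ?_, ?_⟩
  · simpa [eval] using DFunLike.congr_fun h (AdjoinRoot.of _ (AdjoinRoot.of _ X))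
  · simpa [eval] using DFunLike.congr_fun h (AdjoinRoot.of _ (AdjoinRoot.root _))
  · simpa [eval] using DFunLike.congr_fun h (AdjoinRoot.root _)

/-- The pole order at infinity of `x ^ i * y ^ j * z ^ k`. -/
def poleOrder (i : (ℕ × Fin C.m) × Fin C.n) : ℕ :=
  i.1.1 * (C.m * C.n) + i.1.2 * (C.n * C.f.natDegree) + i.2 * (C.m * C.h.natDegree)

theorem poleOrder_injective : Function.Injective C.poleOrder := by
  rintro ⟨⟨i, j⟩, k⟩ ⟨⟨i', j'⟩, k'⟩ heq
  simp only [poleOrder] at heq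
  have hj : (j : ℕ) = j' := by
    refine Nat.ModEq.eq_of_lt_of_lt (m := C.m) ?_ j.2 j'.2
    refine Nat.ModEq.cancel_right_of_coprime (C.coprime.mul_right C.coprime_f) ?_
    simpa [Nat.ModEq, Nat.add_mod, Nat.mul_mod, mul_left_comm _ C.m] using congrArg (· % C.m) heq
  have hk : (k : ℕ) = k' := by
    refine Nat.ModEq.eq_of_lt_of_lt (m := C.n) ?_ k.2 k'.2
    refine Nat.ModEq.cancel_right_of_coprime (C.coprime.symm.mul_right C.coprime_h) ?_
    simpa [Nat.ModEq, Nat.add_mod, Nat.mul_mod, mul_left_comm _ C.m] using congrArg (· % C.n) heq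
  rw [hj, hk, add_left_inj, add_left_inj,
    Nat.mul_left_inj (mul_pos C.m_pos C.n_pos).ne'] at heq
  simp [heq, Fin.ext hj, Fin.ext hk]

/-- All integers from this bound on are pole orders at infinity, so it bounds the genus. -/
def gapBound : ℕ :=
  C.m * (C.n * C.f.natDegree) + C.n * (C.m * C.h.natDegree)

theorem mem_range_poleOrder {N : ℕ} (hN : C.gapBound ≤ N) : N ∈ Set.range C.poleOrder := by
  obtain ⟨j, hj, hjN⟩ := Nat.exists_mul_mod_eq_of_coprime N
    (C.coprime.mul_right C.coprime_f).symm C.m_pos.ne'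
  obtain ⟨k, hk, hkN⟩ := Nat.exists_mul_mod_eq_of_coprime N
    (C.coprime.symm.mul_right C.coprime_h).symm C.n_pos.ne'
  have hle : j * (C.n * C.f.natDegree) + k * (C.m * C.h.natDegree) ≤ N :=
    (add_le_add (Nat.mul_le_mul_right _ hj.le) (Nat.mul_le_mul_right _ hk.le)).trans hN
  have hm : j * (C.n * C.f.natDegree) + k * (C.m * C.h.natDegree) ≡ N [MOD C.m] := by
    simpa [Nat.ModEq, Nat.add_mod, Nat.mul_mod, mul_left_comm _ C.m, mul_comm j] using hjN
  have hn : j * (C.n * C.f.natDegree) + k * (C.m * C.h.natDegree) ≡ N [MOD C.n] := by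
    simpa [Nat.ModEq, Nat.add_mod, Nat.mul_mod, mul_left_comm _ C.n, mul_comm k] using hkN
  obtain ⟨i, hi⟩ := C.coprime.mul_dvd_of_dvd_of_dvd
    ((Nat.modEq_iff_dvd' hle).1 hm) ((Nat.modEq_iff_dvd' hle).1 hn)
  refine ⟨((i, ⟨j, hj⟩), ⟨k, hk⟩), ?_⟩
  rw [poleOrder, mul_comm i, ← hi, add_assoc]
  exact Nat.sub_add_cancel hle

theorem IsPoint.valuation_y {C : OnePointCurve K} {L Γ : Type*} [Field L] [Algebra K L]
    [LinearOrderedCommGroupWithZero Γ] (v : Valuation L Γ) [v.IsTrivialOn K] {x y z : L}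
    (hp : C.IsPoint x y z) (hx : 1 < v x) : v y ^ C.m = v x ^ C.f.natDegree := by
  rw [← map_pow, hp.1,
    valuation_aeval_eq_valuation_X_pow_natDegree_of_one_lt_valuation_X _ hx C.f_ne_zero]

theorem IsPoint.valuation_z {C : OnePointCurve K} {L Γ : Type*} [Field L] [Algebra K L]
    [LinearOrderedCommGroupWithZero Γ] (v : Valuation L Γ) [v.IsTrivialOn K] {x y z : L}
    (hp : C.IsPoint x y z) (hx : 1 < v x) : v z ^ C.n = v x ^ C.h.natDegree := by
  have hvh := valuation_aeval_eq_valuation_X_pow_natDegree_of_one_lt_valuation_X _ hx C.h_ne_zero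
  have hvg : v (aeval x C.g) ≤ v x ^ C.g.natDegree := by
    rcases eq_or_ne C.g 0 with hg | hg
    · simp [hg]
    · exact (valuation_aeval_eq_valuation_X_pow_natDegree_of_one_lt_valuation_X _ hx hg).le
  obtain ⟨n, hn⟩ : ∃ n, C.n = n + 1 := Nat.exists_eq_succ_of_ne_zero C.n_pos.ne'
  have hz := hp.2
  have hdeg := C.natDegree_lt
  have hn1 := C.one_lt_n
  rw [hn] at hz hdeg hn1 ⊢
  refine (valuation_pow_eq_of_pow_eq_mul_add v (by omega) hz ?_).trans hvh
  calc v (aeval x C.g) ^ (n + 1) ≤ (v x ^ C.g.natDegree) ^ (n + 1) := by gcongr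
    _ = v x ^ ((n + 1) * C.g.natDegree) := by rw [← pow_mul, mul_comm]
    _ < v x ^ (n * C.h.natDegree) := pow_lt_pow_right₀ hx hdeg
    _ = v (aeval x C.h) ^ n := by rw [hvh, ← pow_mul, mul_comm]

theorem valuation_monomial {C : OnePointCurve K} {L Γ : Type*} [Field L] [Algebra K L]
    [LinearOrderedCommGroupWithZero Γ] (v : Valuation L Γ) [v.IsTrivialOn K] {x y z : L}
    (hp : C.IsPoint x y z) (hx : 1 < v x) (i : ℕ) (j : Fin C.m) (k : Fin C.n) :
    v (x ^ i * y ^ (j : ℕ) * z ^ (k : ℕ)) ^ (C.m * C.n) = v x ^ C.poleOrder ((i, j), k) := by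
  calc _ = v x ^ (i * (C.m * C.n)) * (v y ^ C.m) ^ (j * C.n) * (v z ^ C.n) ^ (k * C.m) := by
        simp only [map_mul, map_pow, mul_pow, ← pow_mul]
        ring_nf
    _ = _ := by
        simp only [hp.valuation_y v hx, hp.valuation_z v hx, poleOrder, ← pow_mul, ← pow_add]
        ring_nf

/-- The monomial basis of the coordinate ring, with the pole orders at infinity read off from a
valuation at a point with coordinates in an extension field. The `m * n`-th power of the
valuation makes all of these orders natural numbers in the same unit. -/
noncomputable def poleBasis {L Γ : Type*} [Field L] [Algebra K L]
    [LinearOrderedCommGroupWithZero Γ] (v : Valuation L Γ) [v.IsTrivialOn K] {x y z : L}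
    (hp : C.IsPoint x y z) (hx : 1 < v x) :
    PoleBasis ((ℕ × Fin C.m) × Fin C.n) K C.CoordRing Γ where
  basis := C.basis
  v := (v.map (powMonoidWithZeroHom (mul_pos C.m_pos C.n_pos).ne')
    fun _ _ h ↦ pow_le_pow_left₀ zero_le h _).comap (C.eval hp).toRingHom
  isTrivialOn := ⟨fun c hc ↦ by
    change v (C.eval hp (algebraMap K _ c)) ^ (C.m * C.n) = 1
    rw [AlgHom.commutes, Valuation.IsTrivialOn.eq_one c hc, one_pow]⟩
  γ := v x
  one_lt_γ := hx
  order := C.poleOrder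
  order_injective := C.poleOrder_injective
  v_basis := fun ⟨⟨i, j⟩, k⟩ ↦ by
    rw [← valuation_monomial v hp hx, ← C.eval_basis hp]
    rfl

theorem exists_isPoint {L : Type*} [Field L] [Algebra K L] [IsAlgClosed L] (x : L) :
    ∃ y z, C.IsPoint x y z := by
  obtain ⟨y, hy⟩ := IsAlgClosed.exists_pow_nat_eq (aeval x C.f) C.m_pos
  have hdeg : (X ^ C.n - (Polynomial.C (aeval x C.g) * X + Polynomial.C (aeval x C.h))).degree
      = (C.n : WithBot ℕ) := by
    rw [degree_sub_eq_left_of_degree_lt] <;> rw [degree_X_pow]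
    exact C.degree_linear_lt _ _
  obtain ⟨z, hz⟩ := IsAlgClosed.exists_root _ (hdeg.trans_ne (by exact_mod_cast C.n_pos.ne'))
  exact ⟨y, z, hy, by simpa [sub_eq_zero] using hz⟩

theorem card_points_le [Fintype K] {p k : ℕ} [ExpChar K p] (hK : Fintype.card K = (p ^ k) ^ 2)
    (hC : (C.gapBound + 2) ^ 2 < p ^ k) {S : Finset (K × K × K)}
    (hS : ∀ s ∈ S, C.IsPoint s.1 s.2.1 s.2.2) :
    S.card ≤ (p ^ k) ^ 2 + (2 * C.gapBound + 1) * p ^ k := by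
  classical
  have hX : Transcendental K (algebraMap (RatFunc K) (AlgebraicClosure (RatFunc K)) RatFunc.X) :=
    (transcendental_algebraMap_iff
      (algebraMap (RatFunc K) (AlgebraicClosure (RatFunc K))).injective).2 RatFunc.transcendental_X
  obtain ⟨V, _, hVx⟩ := exists_valuationSubring_one_lt hX
  obtain ⟨y, z, hp⟩ := C.exists_isPoint
    (algebraMap (RatFunc K) (AlgebraicClosure (RatFunc K)) RatFunc.X)
  let evalAt (s : S) : C.CoordRing →ₐ[K] K := C.eval (hS s s.2)
  have hinj : Function.Injective evalAt := fun s t hst ↦ by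
    obtain ⟨hx, hy, hz⟩ := C.eval_injective hst
    exact Subtype.ext (Prod.ext hx (Prod.ext hy hz))
  have := (C.poleBasis V.valuation hp hVx).card_algHom_le hK (fun N ↦ C.mem_range_poleOrder) hC
    (Finset.univ.image evalAt)
  rwa [Finset.card_image_of_injective _ hinj, Finset.card_univ, Fintype.card_coe] at this

end OnePointCurve

end OnePointCurve

section HilbertNinety

theorem exists_pow_eq_of_pow_eq_one {G : Type*} [CommGroup G] [IsCyclic G] [Finite G] {d t : ℕ}
    (hcard : Nat.card G = d * t) {g : G} (hg : g ^ t = 1) : ∃ y, y ^ d = g := by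
  have hd : 0 < d := Nat.pos_of_ne_zero fun h ↦ (Nat.card_pos (α := G)).ne' (by simp [hcard, h])
  have hle : (powMonoidHom d : G →* G).range ≤ (powMonoidHom t : G →* G).ker := by
    rintro _ ⟨y, rfl⟩
    rw [MonoidHom.mem_ker, powMonoidHom_apply, powMonoidHom_apply, ← pow_mul, ← hcard,
      pow_card_eq_one']
  have hcard_le :
      Nat.card (powMonoidHom t : G →* G).ker ≤ Nat.card (powMonoidHom d : G →* G).range := by
    rw [IsCyclic.card_powMonoidHom_ker, IsCyclic.card_powMonoidHom_range, hcard,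
      Nat.gcd_mul_left_left, Nat.gcd_mul_right_left, Nat.mul_div_cancel_left _ hd]
  exact (Subgroup.eq_of_le_of_card_ge hle hcard_le).ge hg

variable (E : Type*) {K : Type*} [Field E] [Fintype E] [Field K] [Algebra E K]

section Finite

variable [Finite K]

theorem mem_zpowers_frobenius (σ : K ≃ₐ[E] K) :
    σ ∈ Subgroup.zpowers (FiniteField.frobeniusAlgEquivOfAlgebraic E K) := by
  obtain ⟨i, rfl⟩ := (FiniteField.bijective_frobeniusAlgEquivOfAlgebraic_pow E K).2 σ
  exact Subgroup.npow_mem_zpowers _ _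

theorem mem_range_algebraMap_of_pow_card_eq {z : K} (hz : z ^ Fintype.card E = z) :
    z ∈ Set.range (algebraMap E K) := by
  refine IntermediateField.mem_bot.1 (IsGalois.mem_bot_iff_fixed z |>.2 fun σ ↦ ?_)
  have hle := Subgroup.zpowers_le.2
    (show FiniteField.frobeniusAlgEquivOfAlgebraic E K ∈ MulAction.stabilizer Gal(K/E) z from hz)
  exact hle (mem_zpowers_frobenius E σ)

theorem exists_pow_card_sub_one_eq_of_norm_eq_one {w : K} (hw : Algebra.norm E w = 1) :
    ∃ y, y ^ (Fintype.card E - 1) = w := by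
  have hw0 : w ≠ 0 := by
    rintro rfl
    simp at hw
  have hdvd : Nat.card E - 1 ∣ Nat.card K - 1 := by
    rw [Module.natCard_eq_pow_finrank (K := E) (V := K)]
    simpa only [one_pow] using Nat.sub_dvd_pow_sub_pow (Nat.card E) 1 (Module.finrank E K)
  have hwpow : Units.mk0 w hw0 ^ ((Nat.card K - 1) / (Nat.card E - 1)) = 1 := by
    ext
    rw [Units.val_pow_eq_pow_val, Units.val_mk0, ← FiniteField.algebraMap_norm_eq_pow, hw, map_one,
      Units.val_one]
  obtain ⟨y, hy⟩ := exists_pow_eq_of_pow_eq_one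
    ((Nat.card_units K).trans (Nat.mul_div_cancel' hdvd).symm) hwpow
  refine ⟨y, ?_⟩
  rw [← Nat.card_eq_fintype_card, ← Units.val_pow_eq_pow_val, hy, Units.val_mk0]

theorem exists_pow_card_sub_self_eq_of_trace_eq_zero {w : K} (hw : Algebra.trace E K w = 0) :
    ∃ z, z ^ Fintype.card E - z = w := by
  let f : K →ₗ[E] K := (FiniteField.frobeniusAlgEquivOfAlgebraic E K).toLinearMap - LinearMap.id
  have hrange : LinearMap.range f ≤ LinearMap.ker (Algebra.trace E K) := by
    rintro _ ⟨z, rfl⟩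
    rw [LinearMap.mem_ker, LinearMap.sub_apply, map_sub, sub_eq_zero]
    exact Algebra.trace_eq_of_algEquiv (FiniteField.frobeniusAlgEquivOfAlgebraic E K) z
  have hker : Module.finrank E (LinearMap.ker f) ≤ 1 := by
    rw [← Module.finrank_self E]
    refine (Submodule.finrank_mono fun z hz ↦ ?_).trans
      (LinearMap.finrank_range_le (Algebra.linearMap E K))
    exact mem_range_algebraMap_of_pow_card_eq E (sub_eq_zero.1 hz)
  have htrace : Module.finrank E (LinearMap.range (Algebra.trace E K)) = 1 := by
    rw [LinearMap.range_eq_top.2 (Algebra.trace_surjective E K), finrank_top, Module.finrank_self]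
  have hrank_f := LinearMap.finrank_range_add_finrank_ker f
  have hrank_trace := LinearMap.finrank_range_add_finrank_ker (Algebra.trace E K)
  have heq := Submodule.eq_of_le_of_finrank_le hrange (by omega)
  exact heq.ge hw

end Finite

variable [Fintype K] [DecidableEq K]

theorem card_sub_one_le_card_filter_pow_eq {w : K} (hw : Algebra.norm E w = 1) :
    Fintype.card E - 1 ≤ (Finset.univ.filter fun y : K ↦ y ^ (Fintype.card E - 1) = w).card := by
  classical
  obtain ⟨y, hy⟩ := exists_pow_card_sub_one_eq_of_norm_eq_one E hw
  have hy0 : y ≠ 0 := by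
    rintro rfl
    have hE : Fintype.card E - 1 ≠ 0 := Nat.sub_ne_zero_of_lt Fintype.one_lt_card
    simp [← hy, hE] at hw
  refine (Fintype.card_units E).symm.trans_le ?_
  rw [← Finset.card_univ]
  refine Finset.card_le_card_of_injOn (fun a ↦ y * algebraMap E K a) (fun a _ ↦ ?_) ?_
  · simp [mul_pow, hy, ← map_pow, FiniteField.pow_card_sub_one_eq_one _ a.ne_zero]
  · exact fun a _ b _ hab ↦ Units.ext ((algebraMap E K).injective (mul_left_cancel₀ hy0 hab))

theorem card_le_card_filter_pow_sub_self_eq {w : K} (hw : Algebra.trace E K w = 0) :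
    Fintype.card E ≤ (Finset.univ.filter fun z : K ↦ z ^ Fintype.card E - z = w).card := by
  obtain ⟨z, hz⟩ := exists_pow_card_sub_self_eq_of_trace_eq_zero E hw
  rw [← Finset.card_univ]
  refine Finset.card_le_card_of_injOn (fun a ↦ z + algebraMap E K a) (fun a _ ↦ ?_) ?_
  · have hadd := map_add (FiniteField.frobeniusAlgHom E K) z (algebraMap E K a)
    simp only [FiniteField.coe_frobeniusAlgHom, ← map_pow, FiniteField.pow_card] at hadd
    simp [hadd, ← hz]
  · exact fun a _ b _ hab ↦ (algebraMap E K).injective (add_left_cancel hab)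

end HilbertNinety

section FibreCount

open Polynomial

variable {K : Type*} [Field K] {q : ℕ} {u α : K}

theorem natDegree_C_mul_X_pow_add_X_pow_sub_two (hq : 1 < q) (hu : u ≠ 0) :
    (C u * (X ^ q + X ^ (q - 2))).natDegree = q := by
  rw [natDegree_C_mul hu, natDegree_add_eq_left_of_natDegree_lt] <;> rw [natDegree_X_pow]
  rw [natDegree_X_pow]
  omega

theorem natDegree_C_mul_X_pow_succ_sub_add (hα : α ≠ 0) (β c : K) :
    (C α * X ^ (q + 1) - C c * X ^ q + C β * X ^ (q - 1)).natDegree = q + 1 := by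
  rw [sub_eq_add_neg, add_assoc, natDegree_add_eq_left_of_natDegree_lt] <;>
    rw [natDegree_C_mul_X_pow _ _ hα]
  refine Nat.lt_succ_of_le ?_
  compute_degree

/-- The curve `y ^ (q - 1) = u * (x ^ q + x ^ (q - 2))`,
`z ^ q = x ^ (q - 1) * z + α * x ^ (q + 1) - c * x ^ q + β * x ^ (q - 1)`. For `x ≠ 0` the
substitution `(x, y, z) = (x, x * s, x * t)` turns it into `s ^ (q - 1) = u * (x + x⁻¹)`,
`t ^ q - t = α * x + β * x⁻¹ - c`. -/
noncomputable def kummerArtinSchreierCurve (hq : 1 < q) (hu : u ≠ 0) (hα : α ≠ 0) (β c : K) :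
    OnePointCurve K where
  m := q - 1
  n := q
  f := C u * (X ^ q + X ^ (q - 2))
  g := X ^ (q - 1)
  h := C α * X ^ (q + 1) - C c * X ^ q + C β * X ^ (q - 1)
  f_ne_zero := ne_zero_of_natDegree_gt (n := 0) <| by
    rw [natDegree_C_mul_X_pow_add_X_pow_sub_two hq hu]
    omega
  coprime := (Nat.coprime_self_sub_left hq.le).2 (by simp)
  coprime_f := by
    rw [natDegree_C_mul_X_pow_add_X_pow_sub_two hq hu]
    exact (Nat.coprime_self_sub_left hq.le).2 (by simp)
  coprime_h := by simp [natDegree_C_mul_X_pow_succ_sub_add hα]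
  natDegree_lt := by
    rw [natDegree_C_mul_X_pow_succ_sub_add hα, natDegree_X_pow, mul_comm]
    exact Nat.mul_lt_mul_of_pos_left q.lt_succ_self (by omega)

theorem gapBound_kummerArtinSchreierCurve_add_two_le (hq : 1 < q) (hu : u ≠ 0) (hα : α ≠ 0)
    (β c : K) : (kummerArtinSchreierCurve hq hu hα β c).gapBound + 2 ≤ 2 * q ^ 3 := by
  simp only [OnePointCurve.gapBound, kummerArtinSchreierCurve,
    natDegree_C_mul_X_pow_add_X_pow_sub_two hq hu, natDegree_C_mul_X_pow_succ_sub_add hα]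
  obtain ⟨d, rfl⟩ : ∃ d, q = d + 2 := ⟨q - 2, by omega⟩
  rw [show d + 2 - 1 = d + 1 from rfl]
  nlinarith

theorem isPoint_kummerArtinSchreierCurve (hq : 1 < q) (hu : u ≠ 0) (hα : α ≠ 0) (β c : K)
    {x y z : K} (hx : x ≠ 0) (hy : y ^ (q - 1) = u * (x + x⁻¹))
    (hz : z ^ q - z = α * x + β * x⁻¹ - c) :
    (kummerArtinSchreierCurve hq hu hα β c).IsPoint x (x * y) (x * z) := by
  obtain ⟨d, rfl⟩ : ∃ d, q = d + 2 := ⟨q - 2, by omega⟩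
  rw [show d + 2 - 1 = d + 1 from rfl] at hy
  constructor <;>
    simp only [kummerArtinSchreierCurve, mul_pow, hy, eq_add_of_sub_eq hz, map_add, map_sub,
      map_mul, map_pow, aeval_X, aeval_C, Algebra.algebraMap_self, RingHom.id_apply,
      Nat.add_sub_cancel, show d + 2 - 1 = d + 1 from rfl]
  · field_simp
    ring
  · field_simp
    ring

theorem card_mul_le_of_le_card_fibers [Fintype K] [DecidableEq K] {p k a b : ℕ} [ExpChar K p]
    (hK : Fintype.card K = (p ^ k) ^ 2) (hp : (2 * q ^ 3) ^ 2 < p ^ k) (hq : 1 < q) (hu : u ≠ 0)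
    (hα : α ≠ 0) (β c : K) {s : Finset K} (hs : ∀ x ∈ s, x ≠ 0)
    (ha : ∀ x ∈ s, a ≤ (Finset.univ.filter fun y ↦ y ^ (q - 1) = u * (x + x⁻¹)).card)
    (hb : ∀ x ∈ s, b ≤ (Finset.univ.filter fun z ↦ z ^ q - z = α * x + β * x⁻¹ - c).card) :
    s.card * (a * b) ≤ (p ^ k) ^ 2 + 4 * q ^ 3 * p ^ k := by
  let lifts (x : K) : Finset (K × K) := (Finset.univ.filter fun y ↦ y ^ (q - 1) = u * (x + x⁻¹))
    ×ˢ (Finset.univ.filter fun z ↦ z ^ q - z = α * x + β * x⁻¹ - c)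
  let toPoint (t : (_ : K) × K × K) : K × K × K := (t.1, t.1 * t.2.1, t.1 * t.2.2)
  have hinj : Set.InjOn toPoint (s.sigma lifts) := by
    rintro ⟨x, y, z⟩ hx ⟨x', y', z'⟩ - h
    have hx0 := hs x (Finset.mem_sigma.1 hx).1
    simp only [toPoint, Prod.mk.injEq] at h
    obtain ⟨rfl, hy, hz⟩ := h
    rw [mul_left_cancel₀ hx0 hy, mul_left_cancel₀ hx0 hz]
  have hgap := gapBound_kummerArtinSchreierCurve_add_two_le hq hu hα β c
  set C := kummerArtinSchreierCurve hq hu hα β c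
  calc s.card * (a * b) ≤ ∑ x ∈ s, (lifts x).card := Finset.card_nsmul_le_sum _ _ _ fun x hx ↦ by
        rw [Finset.card_product]
        exact Nat.mul_le_mul (ha x hx) (hb x hx)
    _ = ((s.sigma lifts).image toPoint).card := by
        rw [Finset.card_image_of_injOn hinj, Finset.card_sigma]
    _ ≤ (p ^ k) ^ 2 + (2 * C.gapBound + 1) * p ^ k := by
        refine C.card_points_le hK (lt_of_le_of_lt (by gcongr) hp) fun t ht ↦ ?_
        obtain ⟨⟨x, y, z⟩, hxyz, rfl⟩ := Finset.mem_image.1 ht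
        simp only [Finset.mem_sigma, lifts, Finset.mem_product, Finset.mem_filter, Finset.mem_univ,
          true_and] at hxyz
        obtain ⟨hx, hy, hz⟩ := hxyz
        exact isPoint_kummerArtinSchreierCurve hq hu hα β c (hs x hx) hy hz
    _ ≤ (p ^ k) ^ 2 + 4 * q ^ 3 * p ^ k := by
        gcongr
        omega

variable (E : Type*) [Field E] [Fintype E] [Fintype K] [Algebra E K]

theorem card_norm_trace_fiber_mul_le [DecidableEq E] {p k : ℕ} [ExpChar K p]
    (hK : Fintype.card K = (p ^ k) ^ 2) (hp : (2 * Fintype.card E ^ 3) ^ 2 < p ^ k) {u α : E}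
    (hu : u ≠ 0) (hα : α ≠ 0) (β c : E) :
    (Finset.univ.filter fun x : K ↦ Algebra.norm E (x + x⁻¹) = u ∧
        Algebra.trace E K (α • x + β • x⁻¹) = c).card *
      ((Fintype.card E - 1) * Fintype.card E) ≤ (p ^ k) ^ 2 + 4 * Fintype.card E ^ 3 * p ^ k := by
  classical
  obtain ⟨u', hu'⟩ := FiniteField.norm_surjective E K u
  obtain ⟨c', hc'⟩ := Algebra.trace_surjective E K c
  have hu'0 : u'⁻¹ ≠ 0 := inv_ne_zero fun h ↦ hu (by simp [← hu', h])
  have hα' : algebraMap E K α ≠ 0 := by simpa using hα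
  refine card_mul_le_of_le_card_fibers hK hp Fintype.one_lt_card hu'0 hα' (algebraMap E K β) c'
    (fun x hx ↦ ?_) (fun x hx ↦ card_sub_one_le_card_filter_pow_eq E ?_)
    (fun x hx ↦ card_le_card_filter_pow_sub_self_eq E ?_) <;>
    rw [Finset.mem_filter] at hx
  · rintro rfl
    simp [hu.symm] at hx
  · rw [map_mul, hx.2.1, Algebra.norm_inv, hu', inv_mul_cancel₀ hu]
  · rw [← Algebra.smul_def, ← Algebra.smul_def, map_sub, hx.2.2, hc', sub_self]

end FibreCount

section MixedCharSum

theorem norm_sum_comp_le_of_card_fiber_le {ι κ V : Type*} [SeminormedAddCommGroup V]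
    [NormedSpace ℝ V] [DecidableEq κ] {s : Finset ι} {t : Finset κ} {g : ι → κ}
    (hg : ∀ x ∈ s, g x ∈ t) {φ : κ → V} (hφ : ∀ i ∈ t, ‖φ i‖ ≤ 1) (hsum : ∑ i ∈ t, φ i = 0) {B : ℝ}
    (hB : ∀ i ∈ t, ((s.filter fun x ↦ g x = i).card : ℝ) ≤ B) :
    ‖∑ x ∈ s, φ (g x)‖ ≤ t.card * B - s.card := by
  have hfiber : ∑ x ∈ s, φ (g x) = ∑ i ∈ t, ((s.filter fun x ↦ g x = i).card : ℝ) • φ i := by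
    rw [← Finset.sum_fiberwise_of_maps_to hg]
    refine Finset.sum_congr rfl fun i _ ↦ ?_
    rw [Finset.sum_congr rfl fun x hx ↦ congrArg φ (Finset.mem_filter.1 hx).2, Finset.sum_const,
      Nat.cast_smul_eq_nsmul]
  have hdefect : ∑ x ∈ s, φ (g x) = -∑ i ∈ t, (B - (s.filter fun x ↦ g x = i).card) • φ i := by
    simp_rw [hfiber, sub_smul, Finset.sum_sub_distrib, ← Finset.smul_sum, hsum, smul_zero, zero_sub,
      neg_neg]
  rw [hdefect, norm_neg]
  calc _ ≤ ∑ i ∈ t, (B - (s.filter fun x ↦ g x = i).card) := norm_sum_le_of_le _ fun i hi ↦ by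
        rw [norm_smul, Real.norm_of_nonneg (sub_nonneg.2 (hB i hi))]
        exact mul_le_of_le_one_right (sub_nonneg.2 (hB i hi)) (hφ i hi)
    _ = t.card * B - s.card := by
        rw [Finset.sum_sub_distrib, Finset.sum_const, nsmul_eq_mul,
          Finset.card_eq_sum_card_fiberwise hg, Nat.cast_sum]

open Polynomial in
theorem card_filter_add_inv_eq_zero_le_three {K : Type*} [Field K] [Fintype K] [DecidableEq K] :
    (Finset.univ.filter fun x : K ↦ x + x⁻¹ = 0).card ≤ 3 := by
  have hdeg : (X ^ 3 + X : K[X]).natDegree = 3 := by compute_degree!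
  refine (card_le_degree_of_subset_roots fun x hx ↦ ?_).trans hdeg.le
  have hx : x + x⁻¹ = 0 := (Finset.mem_filter.1 hx).2
  rw [mem_roots (ne_zero_of_natDegree_gt (n := 0) (by omega))]
  rcases eq_or_ne x 0 with rfl | h0
  · simp
  · have : x ^ 3 + x = x ^ 2 * (x + x⁻¹) := by field_simp
    simp [this, hx]

theorem card_le_card_filter_add_inv_ne_zero_add_three {K : Type*} [Field K] [Fintype K]
    [DecidableEq K] : Fintype.card K ≤ (Finset.univ.filter fun x : K ↦ x + x⁻¹ ≠ 0).card + 3 := by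
  rw [← Finset.card_univ, ← Finset.card_filter_add_card_filter_not fun x : K ↦ x + x⁻¹ = 0,
    add_comm]
  exact Nat.add_le_add_left card_filter_add_inv_eq_zero_le_three _

theorem norm_mulChar_le_one {M : Type*} [CommMonoid M] [Finite Mˣ] (χ : MulChar M ℂ) (u : M) :
    ‖χ u‖ ≤ 1 := by
  by_cases hu : IsUnit u
  · obtain ⟨u, rfl⟩ := hu
    exact (MonoidHom.isOfFinOrder ((χ : M →* ℂ).comp (Units.coeHom M))
      (isOfFinOrder_of_finite u)).norm_eq_one.le
  · simp [χ.map_nonunit hu]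

variable (K : Type*) {E : Type*} [Field E] [Field K] [Fintype K] [Algebra E K]

/-- The sum of `χ (N (x + x⁻¹)) * ψ (Tr (α * x + β * x⁻¹))` over the extension `K` of the field
of definition `E` of the characters. The terms with `x = 0` or `x ^ 2 = -1` vanish. -/
noncomputable def mixedCharSum (χ : MulChar E ℂ) (ψ : AddChar E ℂ) (α β : E) : ℂ :=
  ∑ x : K, χ (Algebra.norm E (x + x⁻¹)) * ψ (Algebra.trace E K (α • x + β • x⁻¹))

theorem mixedCharSum_swap (χ : MulChar E ℂ) (ψ : AddChar E ℂ) (α β : E) :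
    mixedCharSum K χ ψ α β = mixedCharSum K χ ψ β α := by
  rw [mixedCharSum, ← Equiv.sum_comp (Equiv.inv K)]
  refine Finset.sum_congr rfl fun x _ ↦ ?_
  rw [Equiv.inv_apply, inv_inv, add_comm x⁻¹ x, add_comm (α • x⁻¹)]

variable [Fintype E]

theorem norm_sum_norm_trace_le {p k : ℕ} [ExpChar K p] (hK : Fintype.card K = (p ^ k) ^ 2)
    (hp : (2 * Fintype.card E ^ 3) ^ 2 < p ^ k) {α : E} (hα : α ≠ 0) (β : E) {φ : E → E → ℂ}
    (hφ : ∀ u c, ‖φ u c‖ ≤ 1) (hφ0 : ∀ c, φ 0 c = 0) (hsum : ∑ u, ∑ c, φ u c = 0) :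
    ‖∑ x : K, φ (Algebra.norm E (x + x⁻¹)) (Algebra.trace E K (α • x + β • x⁻¹))‖ ≤
      4 * Fintype.card E ^ 3 * p ^ k + 3 := by
  classical
  let g (x : K) : E × E := (Algebra.norm E (x + x⁻¹), Algebra.trace E K (α • x + β • x⁻¹))
  let s := Finset.univ.filter fun x : K ↦ x + x⁻¹ ≠ 0
  let t : Finset (E × E) := {0}ᶜ ×ˢ Finset.univ
  have hsum_s : ∑ x ∈ s, φ (g x).1 (g x).2 = ∑ x : K, φ (g x).1 (g x).2 :=
    Finset.sum_filter_of_ne (p := fun x : K ↦ x + x⁻¹ ≠ 0) fun x _ hx hx0 ↦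
      hx (by simp [g, hx0, hφ0])
  have hsum_t : ∑ i ∈ t, φ i.1 i.2 = 0 := by
    rw [Finset.sum_product, ← hsum]
    exact Finset.sum_subset (Finset.subset_univ _) fun u _ hu ↦ by simp_all
  have hcard_t : (t.card : ℝ) = ((Fintype.card E - 1) * Fintype.card E : ℕ) := by
    rw [Finset.card_product, Finset.card_compl, Finset.card_singleton, Finset.card_univ]
  have hcard_t0 : (t.card : ℝ) ≠ 0 := by
    rw [hcard_t, Nat.cast_ne_zero]
    exact Nat.mul_ne_zero (Nat.sub_ne_zero_of_lt Fintype.one_lt_card) Fintype.card_ne_zero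
  have hcard_s : ((p ^ k : ℝ) ^ 2) ≤ s.card + 3 := by
    exact_mod_cast hK.symm.trans_le card_le_card_filter_add_inv_ne_zero_add_three
  have hbound := norm_sum_comp_le_of_card_fiber_le (s := s) (t := t) (g := g)
    (φ := fun i ↦ φ i.1 i.2) (B := ((p ^ k) ^ 2 + 4 * Fintype.card E ^ 3 * p ^ k) / t.card)
    (fun x hx ↦ by simpa [s, t, g] using hx) (fun i _ ↦ hφ _ _) hsum_t fun i hi ↦ by
      rw [le_div_iff₀ (by positivity), hcard_t]
      have hfiber :=
        card_norm_trace_fiber_mul_le E hK hp (u := i.1) (by simpa [t] using hi) hα β i.2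
      exact_mod_cast (Nat.mul_le_mul_right _ <| Finset.card_le_card fun x hx ↦ by
        simpa [g, Prod.ext_iff] using (Finset.mem_filter.1 hx).2).trans hfiber
  rw [mul_div_cancel₀ _ hcard_t0, hsum_s] at hbound
  exact hbound.trans (by linarith)

theorem norm_mixedCharSum_le {p k : ℕ} [ExpChar K p] (hK : Fintype.card K = (p ^ k) ^ 2)
    (hp : (2 * Fintype.card E ^ 3) ^ 2 < p ^ k) {χ : MulChar E ℂ} {ψ : AddChar E ℂ} (hψ : ψ ≠ 1)
    {α β : E} (h : χ ≠ 1 ∨ α ≠ 0 ∨ β ≠ 0) :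
    ‖mixedCharSum K χ ψ α β‖ ≤ 4 * Fintype.card E ^ 3 * p ^ k + 3 := by
  have hne {α β : E} (hα : α ≠ 0) :
      ‖mixedCharSum K χ ψ α β‖ ≤ 4 * Fintype.card E ^ 3 * p ^ k + 3 := by
    refine norm_sum_norm_trace_le K hK hp hα β (φ := fun u c ↦ χ u * ψ c) (fun u c ↦ ?_)
      (fun c ↦ by simp [MulChar.map_zero]) ?_
    · rw [norm_mul, AddChar.norm_apply, mul_one]
      exact norm_mulChar_le_one χ u
    · simp_rw [← Finset.mul_sum, AddChar.sum_eq_zero_of_ne_one hψ, mul_zero, Finset.sum_const_zero]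
  rcases ne_or_eq α 0 with hα | rfl
  · exact hne hα
  rcases ne_or_eq β 0 with hβ | rfl
  · rw [mixedCharSum_swap]
    exact hne hβ
  have hχ : χ ≠ 1 := by simpa using h
  have := norm_sum_norm_trace_le K hK hp one_ne_zero 0 (φ := fun u _ ↦ χ u)
    (fun u _ ↦ norm_mulChar_le_one χ u) (fun _ ↦ MulChar.map_zero χ) (by
      simp_rw [Finset.sum_const, ← Finset.smul_sum, MulChar.sum_eq_zero_of_ne_one hχ, smul_zero])
  simpa [mixedCharSum] using this

end MixedCharSum

section Newton

open Finset MvPolynomial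

variable {𝕜 : Type*} [Field 𝕜] [IsAlgClosed 𝕜] {n : ℕ} {c : ℕ → 𝕜}

open Polynomial in
theorem exists_aeval_esymm_eq (hc0 : c 0 = 1) (hc : ∀ k, n < k → c k = 0) :
    ∃ ω : Fin n → 𝕜, ∀ k, MvPolynomial.aeval ω (esymm (Fin n) 𝕜 k) = (-1) ^ k * c k := by
  classical
  let p : 𝕜[X] := ∑ i ∈ range (n + 1), Polynomial.C (c (n - i)) * Polynomial.X ^ i
  have hcoeff {i : ℕ} (hi : i ≤ n) : p.coeff i = c (n - i) := by
    simp [p, finsetSum_coeff, hi]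
  have hdeg_le : p.natDegree ≤ n := natDegree_sum_le_of_forall_le _ _ fun i hi ↦
    (natDegree_C_mul_X_pow_le _ _).trans (Nat.lt_succ_iff.1 (mem_range.1 hi))
  have hmonic : p.Monic := monic_of_natDegree_le_of_coeff_eq_one n hdeg_le (by simp [hcoeff, hc0])
  have hdeg : p.natDegree = n := hdeg_le.antisymm <| le_natDegree_of_ne_zero (by simp [hcoeff, hc0])
  have hcard : Multiset.card p.roots = p.natDegree :=
    (IsAlgClosed.splits p).natDegree_eq_card_roots.symm
  let e : Fin n ≃ p.roots.ToType := (Fintype.equivFinOfCardEq (by simp [hcard, hdeg])).symm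
  let ω (i : Fin n) : 𝕜 := e i
  refine ⟨ω, fun k ↦ ?_⟩
  have hroots : univ.val.map ω = p.roots :=
    calc univ.val.map ω = (univ.val.map e).map fun x : p.roots ↦ x.1 := (Multiset.map_map ..).symm
      _ = p.roots := by
        rw [Multiset.map_univ_val_equiv]
        exact p.roots.map_univ_coe
  rw [aeval_esymm_eq_multiset_esymm, hroots]
  rcases le_or_gt k n with hk | hk
  · have hcoeff_k := coeff_eq_esymm_roots_of_card hcard (k := n - k) (hdeg ▸ n.sub_le k)
    rw [hcoeff (n.sub_le k), hmonic.leadingCoeff, one_mul, hdeg, Nat.sub_sub_self hk] at hcoeff_k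
    rw [hcoeff_k, ← mul_assoc, ← mul_pow, neg_one_mul, neg_neg, one_pow, one_mul]
  · rw [hc k hk, mul_zero, Multiset.esymm, Multiset.powersetCard_eq_empty _ (by omega)]
    simp

theorem exists_eq_neg_sum_pow {a : ℕ → 𝕜} (hc0 : c 0 = 1) (hc : ∀ k, n < k → c k = 0)
    (hrec : ∀ k, k * c k = ∑ i ∈ antidiagonal k with i.1 < k, c i.1 * a i.2) :
    ∃ ω : Fin n → 𝕜, ∀ j, j ≠ 0 → a j = -∑ i, ω i ^ j := by
  obtain ⟨ω, hω⟩ := exists_aeval_esymm_eq hc0 hc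
  have hnewton (k : ℕ) :
      k * c k = -∑ i ∈ antidiagonal k with i.1 < k, c i.1 * ∑ l, ω l ^ i.2 := by
    have hN := congrArg (aeval ω) (mul_esymm_eq_sum (Fin n) 𝕜 k)
    simp only [map_mul, map_natCast, hω, map_pow, map_neg, map_one, map_sum, psum, aeval_X,
      ← mul_assoc, ← mul_pow, neg_one_mul, neg_neg, one_pow, one_mul] at hN
    have hsign : (-1 : 𝕜) ^ k * (-1) ^ k = 1 := by rw [← mul_pow]; simp
    rw [pow_succ] at hN
    linear_combination (-1) ^ k * hN -
      (k * c k + ∑ i ∈ antidiagonal k with i.1 < k, c i.1 * ∑ l, ω l ^ i.2) * hsign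
  refine ⟨ω, fun k ↦ ?_⟩
  induction k using Nat.strong_induction_on with
  | _ k ih =>
    intro hk
    have hsum : ∑ i ∈ antidiagonal k with i.1 < k, c i.1 * (a i.2 + ∑ l, ω l ^ i.2) = 0 := by
      simp_rw [mul_add, sum_add_distrib, ← hrec, hnewton, neg_add_cancel]
    rw [sum_eq_single_of_mem (0, k) (by simp [Nat.pos_of_ne_zero hk]), hc0, one_mul] at hsum
    · exact eq_neg_of_add_eq_zero_left hsum
    · rintro ⟨i, j⟩ hij hne
      simp only [mem_filter, HasAntidiagonal.mem_antidiagonal, ne_eq, Prod.mk.injEq] at hij hne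
      rw [ih j (by omega) (by omega), neg_add_cancel, mul_zero]

end Newton

section LSeries

open Polynomial Finset UniqueFactorizationMonoid

variable {E R : Type*} [Field E] [CommRing R]

/-- Complete multiplicativity on monic polynomials: such a `lam` is a Dirichlet character on the
polynomial ring, with `∑ k, monicSum lam k * T ^ k` as its `L`-function. -/
structure IsMonicMultiplicative (lam : E[X] → R) : Prop where
  map_one : lam 1 = 1
  map_mul : ∀ f g : E[X], f.Monic → g.Monic → lam (f * g) = lam f * lam g

theorem IsMonicMultiplicative.map_pow {lam : E[X] → R} (hlam : IsMonicMultiplicative lam)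
    {f : E[X]} (hf : f.Monic) (a : ℕ) : lam (f ^ a) = lam f ^ a := by
  induction a with
  | zero => simp [hlam.map_one]
  | succ a ih => rw [pow_succ, hlam.map_mul _ _ (hf.pow a) hf, ih, pow_succ]

open Classical in
theorem card_filter_pow_dvd {h P : E[X]} (h0 : h ≠ 0) (hP : P.Monic) (hirr : Irreducible P) :
    {j ∈ range (h.natDegree + 1) | j ≠ 0 ∧ P.natDegree ∣ j ∧ P ^ (j / P.natDegree) ∣ h}.card =
      (normalizedFactors h).count P := by
  have hdeg : 0 < P.natDegree := hirr.natDegree_pos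
  have hpow_dvd (a : ℕ) : P ^ a ∣ h ↔ a ≤ (normalizedFactors h).count P := by
    rw [pow_dvd_iff_le_emultiplicity, emultiplicity_eq_count_normalizedFactors hirr h0,
      hP.normalize_eq_self, Nat.cast_le]
  have himage :
      {j ∈ range (h.natDegree + 1) | j ≠ 0 ∧ P.natDegree ∣ j ∧ P ^ (j / P.natDegree) ∣ h} =
        (Icc 1 ((normalizedFactors h).count P)).image (P.natDegree * ·) := by
    ext j
    simp only [mem_filter, mem_range, mem_image, mem_Icc, Nat.lt_succ_iff]
    constructor
    · rintro ⟨-, hj, ⟨a, rfl⟩, hdvd⟩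
      rw [Nat.mul_div_cancel_left _ hdeg, hpow_dvd] at hdvd
      exact ⟨a, ⟨Nat.pos_of_ne_zero (right_ne_zero_of_mul hj), hdvd⟩, rfl⟩
    · rintro ⟨a, ⟨ha, hcount⟩, rfl⟩
      have hdvd := (hpow_dvd a).2 hcount
      rw [Nat.mul_div_cancel_left _ hdeg]
      refine ⟨?_, (Nat.mul_pos hdeg ha).ne', dvd_mul_right _ _, hdvd⟩
      simpa [natDegree_pow, mul_comm] using natDegree_le_of_dvd hdvd h0
  rw [himage, card_image_of_injective _ fun a b hab ↦ Nat.eq_of_mul_eq_mul_left hdeg hab,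
    Nat.card_Icc, Nat.add_sub_cancel]

variable (E)

theorem finite_setOf_monic_natDegree_eq [Finite E] (k : ℕ) :
    {h : E[X] | h.Monic ∧ h.natDegree = k}.Finite := by
  refine Set.Finite.of_injOn (f := fun h (i : Fin (k + 1)) ↦ h.coeff i)
    (fun _ _ ↦ Set.mem_univ _) (fun f hf g hg hfg ↦ ?_) Set.finite_univ
  rw [ext_iff_natDegree_le hf.2.le hg.2.le]
  exact fun i hi ↦ congrFun hfg ⟨i, Nat.lt_succ_of_le hi⟩

variable [Finite E]

/-- The monic polynomials of degree `k` over a finite field. -/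
noncomputable def monicsOfDegree (k : ℕ) : Finset E[X] :=
  (finite_setOf_monic_natDegree_eq E k).toFinset

open Classical in
/-- The monic irreducible polynomials whose degree divides `j`; the empty set for `j = 0`. -/
noncomputable def irreduciblesOfDegreeDvd (j : ℕ) : Finset E[X] :=
  (j.divisors.biUnion (monicsOfDegree E)).filter Irreducible

variable {E}

@[simp]
theorem mem_monicsOfDegree {k : ℕ} {h : E[X]} :
    h ∈ monicsOfDegree E k ↔ h.Monic ∧ h.natDegree = k := by
  simp [monicsOfDegree]

theorem mem_irreduciblesOfDegreeDvd {j : ℕ} {P : E[X]} :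
    P ∈ irreduciblesOfDegreeDvd E j ↔ P.Monic ∧ Irreducible P ∧ P.natDegree ∣ j ∧ j ≠ 0 := by
  simp only [irreduciblesOfDegreeDvd, mem_filter, mem_biUnion, Nat.mem_divisors, mem_monicsOfDegree]
  constructor
  · rintro ⟨⟨_, ⟨hdvd, hj⟩, hmonic, rfl⟩, hirr⟩
    exact ⟨hmonic, hirr, hdvd, hj⟩
  · rintro ⟨hmonic, hirr, hdvd, hj⟩
    exact ⟨⟨_, ⟨hdvd, hj⟩, hmonic, rfl⟩, hirr⟩

open Classical in
theorem natDegree_eq_sum_irreduciblesOfDegreeDvd {h : E[X]} (hh : h.Monic) :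
    h.natDegree = ∑ j ∈ range (h.natDegree + 1),
      ∑ P ∈ irreduciblesOfDegreeDvd E j with P ^ (j / P.natDegree) ∣ h, P.natDegree := by
  have h0 := hh.ne_zero
  have hmonic {P : E[X]} (hP : P ∈ normalizedFactors h) : P.Monic := by
    rw [← normalize_normalized_factor P hP]
    exact monic_normalize (irreducible_of_normalized_factor P hP).ne_zero
  have hprod : (normalizedFactors h).prod = h := by
    rw [prod_normalizedFactors_eq h0, hh.normalize_eq_self]
  calc h.natDegree = ((normalizedFactors h).map natDegree).sum := by
        rw [← natDegree_multiset_prod_of_monic _ fun P ↦ hmonic, hprod]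
    _ = ∑ P ∈ (normalizedFactors h).toFinset, ∑ j ∈ range (h.natDegree + 1) with
          j ≠ 0 ∧ P.natDegree ∣ j ∧ P ^ (j / P.natDegree) ∣ h, P.natDegree := by
        rw [sum_multiset_map_count]
        refine sum_congr rfl fun P hP ↦ ?_
        rw [Multiset.mem_toFinset] at hP
        rw [sum_const, card_filter_pow_dvd h0 (hmonic hP) (irreducible_of_normalized_factor P hP)]
    _ = _ := sum_comm' fun P j ↦ by
        simp only [Multiset.mem_toFinset, mem_filter, mem_irreduciblesOfDegreeDvd]
        constructor
        · rintro ⟨hP, hj, hj0, hdvd, hpow⟩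
          exact ⟨⟨⟨hmonic hP, irreducible_of_normalized_factor P hP, hdvd, hj0⟩, hpow⟩, hj⟩
        · rintro ⟨⟨⟨hPm, hirr, ⟨a, rfl⟩, hj0⟩, hpow⟩, hj⟩
          refine ⟨?_, hj, hj0, dvd_mul_right _ _, hpow⟩
          rw [Nat.mul_div_cancel_left _ hirr.natDegree_pos] at hpow
          have hdvd := (dvd_pow_self P (right_ne_zero_of_mul hj0)).trans hpow
          obtain ⟨Q, hQ, hPQ⟩ := exists_mem_normalizedFactors_of_dvd h0 hirr hdvd
          rwa [eq_of_monic_of_associated hPm (hmonic hQ) hPQ]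

variable (lam : E[X] → R)

/-- The coefficient of `T ^ k` in the `L`-function of `lam`. -/
noncomputable def monicSum (k : ℕ) : R := ∑ h ∈ monicsOfDegree E k, lam h

/-- The coefficient of `T ^ j` in `T` times the logarithmic derivative of the `L`-function. -/
noncomputable def vonMangoldtSum (j : ℕ) : R :=
  ∑ P ∈ irreduciblesOfDegreeDvd E j, P.natDegree * lam P ^ (j / P.natDegree)

variable {lam}

theorem IsMonicMultiplicative.monicSum_zero (hlam : IsMonicMultiplicative lam) :
    monicSum lam 0 = 1 := by
  have hone : monicsOfDegree E 0 = {1} := by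
    ext h
    rw [mem_monicsOfDegree, mem_singleton]
    exact ⟨fun hh ↦ hh.1.natDegree_eq_zero.1 hh.2, fun hh ↦ hh ▸ ⟨monic_one, natDegree_one⟩⟩
  rw [monicSum, hone, sum_singleton, hlam.map_one]

open Classical in
theorem IsMonicMultiplicative.sum_filter_dvd (hlam : IsMonicMultiplicative lam) {g : E[X]}
    (hg : g.Monic) (k : ℕ) :
    ∑ h ∈ monicsOfDegree E (k + g.natDegree) with g ∣ h, lam h = monicSum lam k * lam g := by
  rw [monicSum, sum_mul]
  symm
  refine sum_bij (fun f _ ↦ f * g) (fun f hf ↦ ?_) (fun f _ f' _ hff' ↦ ?_) (fun h hh ↦ ?_)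
    (fun f hf ↦ ?_)
  · rw [mem_monicsOfDegree] at hf
    rw [mem_filter, mem_monicsOfDegree]
    exact ⟨⟨hf.1.mul hg, by rw [hf.1.natDegree_mul hg, hf.2]⟩, dvd_mul_left _ _⟩
  · exact mul_right_cancel₀ hg.ne_zero hff'
  · obtain ⟨hh, f, rfl⟩ := mem_filter.1 hh
    rw [mem_monicsOfDegree] at hh
    have hf : f.Monic := hg.of_mul_monic_left hh.1
    rw [hg.natDegree_mul hf] at hh
    exact ⟨f, mem_monicsOfDegree.2 ⟨hf, by omega⟩, mul_comm _ _⟩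
  · rw [hlam.map_mul _ _ (mem_monicsOfDegree.1 hf).1 hg]

theorem IsMonicMultiplicative.mul_monicSum (hlam : IsMonicMultiplicative lam) (k : ℕ) :
    k * monicSum lam k = ∑ i ∈ antidiagonal k, monicSum lam i.1 * vonMangoldtSum lam i.2 := by
  classical
  have hterm {h : E[X]} (hh : h ∈ monicsOfDegree E k) : k * lam h = ∑ j ∈ range (k + 1),
      ∑ P ∈ irreduciblesOfDegreeDvd E j, if P ^ (j / P.natDegree) ∣ h then
        P.natDegree * lam h else 0 := by
    obtain ⟨hmonic, rfl⟩ := mem_monicsOfDegree.1 hh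
    conv_lhs => rw [natDegree_eq_sum_irreduciblesOfDegreeDvd hmonic]
    simp_rw [← sum_filter, Nat.cast_sum, sum_mul]
  rw [monicSum, mul_sum, sum_congr rfl fun h hh ↦ hterm hh, sum_comm,
    ← Nat.sum_antidiagonal_swap, Nat.sum_antidiagonal_eq_sum_range_succ_mk]
  refine sum_congr rfl fun j hj ↦ ?_
  rw [sum_comm, Prod.swap_prod_mk, vonMangoldtSum, mul_sum]
  refine sum_congr rfl fun P hP ↦ ?_
  obtain ⟨hmonic, -, hdvd, -⟩ := mem_irreduciblesOfDegreeDvd.1 hP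
  have hdeg : (P ^ (j / P.natDegree)).natDegree = j := by
    rw [natDegree_pow, Nat.div_mul_cancel hdvd]
  have hsum := hlam.sum_filter_dvd (hmonic.pow (j / P.natDegree)) (k - j)
  rw [hdeg, Nat.sub_add_cancel (Nat.lt_succ_iff.1 (mem_range.1 hj)), hlam.map_pow hmonic] at hsum
  rw [← sum_filter, ← mul_sum, hsum]
  exact mul_left_comm _ _ _

theorem IsMonicMultiplicative.exists_vonMangoldtSum_eq {𝕜 : Type*} [Field 𝕜] [IsAlgClosed 𝕜]
    {lam : E[X] → 𝕜} (hlam : IsMonicMultiplicative lam) {n : ℕ}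
    (hzero : ∀ k, n < k → monicSum lam k = 0) :
    ∃ ω : Fin n → 𝕜, ∀ j, j ≠ 0 → vonMangoldtSum lam j = -∑ i, ω i ^ j := by
  refine exists_eq_neg_sum_pow hlam.monicSum_zero hzero fun k ↦ ?_
  rw [hlam.mul_monicSum, sum_filter_of_ne]
  rintro ⟨i, j⟩ hij hne
  rw [HasAntidiagonal.mem_antidiagonal] at hij
  refine lt_of_le_of_ne (by omega) fun hik ↦ hne ?_
  obtain rfl : j = 0 := by omega
  simp [vonMangoldtSum, irreduciblesOfDegreeDvd]

end LSeries

section CharacterWeight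

open Finset Polynomial

variable {E : Type*} [Field E]

/-- The logarithmic derivative of `h` at the origin; its value is junk when `h(0) = 0`. -/
noncomputable def logDerivAtZero (h : E[X]) : E := h.coeff 1 / h.coeff 0

theorem logDerivAtZero_mul {f g : E[X]} (hf : f.coeff 0 ≠ 0) (hg : g.coeff 0 ≠ 0) :
    logDerivAtZero (f * g) = logDerivAtZero f + logDerivAtZero g := by
  unfold logDerivAtZero
  rw [mul_coeff_zero, mul_coeff_one]
  field_simp
  ring

theorem logDerivAtZero_prod {ι : Type*} {s : Finset ι} {f : ι → E[X]}
    (hf : ∀ i ∈ s, (f i).coeff 0 ≠ 0) :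
    logDerivAtZero (∏ i ∈ s, f i) = ∑ i ∈ s, logDerivAtZero (f i) := by
  classical
  induction s using Finset.induction_on with
  | empty => simp [logDerivAtZero, coeff_one]
  | insert a s ha ih =>
    have hs : ∀ i ∈ s, (f i).coeff 0 ≠ 0 := fun i hi ↦ hf i (mem_insert_of_mem hi)
    have hprod : (∏ i ∈ s, f i).coeff 0 ≠ 0 := by
      rw [coeff_zero_prod]
      exact prod_ne_zero_iff.2 hs
    rw [prod_insert ha, sum_insert ha, logDerivAtZero_mul (hf a (mem_insert_self _ _)) hprod, ih hs]

theorem resultant_X_right (h : E[X]) : h.resultant X = (-1) ^ h.natDegree * h.coeff 0 := by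
  rw [coeff_zero_eq_eval_zero, natDegree_X, ← resultant_X_sub_C_right h h.natDegree 0 le_rfl, C_0,
    sub_zero]

variable (χ : MulChar E ℂ) (ψ : AddChar E ℂ) (α β : E)

/-- The multiplicative function on monic polynomials whose von Mangoldt sums are the mixed character
sums. For monic `h` with roots `r`, its value is
`χ (∏ (r + r⁻¹)) * ψ (∑ (α r + β r⁻¹))`, and `0` if `0` is a root. -/
noncomputable def charWeight (h : E[X]) : ℂ :=
  χ (h.resultant (X ^ 2 + 1) * (h.resultant X)⁻¹) *
    ψ (-(α * h.nextCoeff) - β * logDerivAtZero h)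

variable {χ ψ α β}

theorem charWeight_of_coeff_zero_eq_zero {h : E[X]} (h0 : h.coeff 0 = 0) :
    charWeight χ ψ α β h = 0 := by
  rw [charWeight, resultant_X_right, h0, mul_zero, inv_zero, mul_zero, MulChar.map_zero, zero_mul]

theorem charWeight_mul {f g : E[X]} (hf : f.Monic) (hg : g.Monic) :
    charWeight χ ψ α β (f * g) = charWeight χ ψ α β f * charWeight χ ψ α β g := by
  rcases eq_or_ne (f.coeff 0) 0 with hf0 | hf0
  · rw [charWeight_of_coeff_zero_eq_zero hf0, charWeight_of_coeff_zero_eq_zero (by simp [hf0]),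
      zero_mul]
  rcases eq_or_ne (g.coeff 0) 0 with hg0 | hg0
  · rw [charWeight_of_coeff_zero_eq_zero hg0, charWeight_of_coeff_zero_eq_zero (by simp [hg0]),
      mul_zero]
  have hres (u : E[X]) : (f * g).resultant u = f.resultant u * g.resultant u := by
    rw [hf.natDegree_mul hg, resultant_mul_left _ _ _ _ le_rfl]
  unfold charWeight
  rw [mul_mul_mul_comm, ← map_mul, ← AddChar.map_add_eq_mul, hres, hres,
    logDerivAtZero_mul hf0 hg0, hf.nextCoeff_mul hg]
  congr 2
  · simp only [mul_inv]
    ring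
  · ring

variable (χ ψ α β) in
theorem isMonicMultiplicative_charWeight : IsMonicMultiplicative (charWeight χ ψ α β) where
  map_one := by simp [charWeight, logDerivAtZero, nextCoeff, coeff_one]
  map_mul _ _ := charWeight_mul

section Twist

theorem add_mem_monicsOfDegree [Finite E] {k : ℕ} {h g : E[X]} (hh : h ∈ monicsOfDegree E k)
    (hg : g.natDegree < k) : h + g ∈ monicsOfDegree E k := by
  obtain ⟨hmonic, rfl⟩ := mem_monicsOfDegree.1 hh
  have hlt := degree_lt_degree hg
  exact mem_monicsOfDegree.2
    ⟨hmonic.add_of_left hlt, natDegree_add_eq_left_of_degree_lt hlt⟩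

theorem monicSum_eq_zero_of_twist [Finite E] {R : Type*} [CommRing R] [NoZeroDivisors R]
    {lam : E[X] → R} {k : ℕ} {T : E[X] → E[X]} {w : R}
    (hT : Set.MapsTo T (monicsOfDegree E k) (monicsOfDegree E k))
    (hinj : Set.InjOn T (monicsOfDegree E k)) (hw : w ≠ 1)
    (hlam : ∀ h ∈ monicsOfDegree E k, lam (T h) = w * lam h) : monicSum lam k = 0 := by
  have htwist : monicSum lam k = w * monicSum lam k := by
    rw [monicSum, mul_sum]
    exact (sum_nbij T hT hinj (surjOn_of_injOn_of_card_le T hT hinj le_rfl)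
      fun h hh ↦ (hlam h hh).symm).symm
  have hzero : (w - 1) * monicSum lam k = 0 := by linear_combination -htwist
  exact (mul_eq_zero.1 hzero).resolve_left (sub_ne_zero.2 hw)

variable {h p : E[X]}

theorem charWeight_add_X_sq_add_one_mul (hdeg : 5 ≤ h.natDegree)
    (hp : p.natDegree + 3 ≤ h.natDegree) :
    charWeight χ ψ α β (h + (X ^ 2 + 1) * p) =
      χ (h.resultant (X ^ 2 + 1) * ((-1) ^ h.natDegree * (h.coeff 0 + p.coeff 0))⁻¹) *
        ψ (-(α * (h.nextCoeff + p.coeff (h.natDegree - 3))) -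
          β * ((h.coeff 1 + p.coeff 1) / (h.coeff 0 + p.coeff 0))) := by
  obtain ⟨k, hk⟩ := Nat.exists_eq_add_of_le' (show 3 ≤ h.natDegree by omega)
  have hquad : (X ^ 2 + 1 : E[X]).natDegree = 2 := by compute_degree!
  have hlt : ((X ^ 2 + 1) * p).degree < h.degree := by
    refine degree_lt_degree (natDegree_mul_le.trans_lt ?_)
    omega
  have hnatDegree : (h + (X ^ 2 + 1) * p).natDegree = h.natDegree :=
    natDegree_add_eq_left_of_degree_lt hlt
  have hnext : (h + (X ^ 2 + 1) * p).nextCoeff = h.nextCoeff + p.coeff (h.natDegree - 3) := by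
    have htop : p.coeff (k + 2) = 0 := coeff_eq_zero_of_natDegree_lt (by omega)
    rw [nextCoeff_of_natDegree_pos (by omega), nextCoeff_of_natDegree_pos (by omega), hnatDegree,
      hk]
    simp [add_mul, coeff_X_pow_mul, htop]
  rw [charWeight, resultant_X_right, hnatDegree, hnext, logDerivAtZero,
    resultant_add_mul_left _ _ _ _ _ (by omega) le_rfl]
  simp [add_mul, coeff_X_pow_mul']

variable [Finite E] {k : ℕ}

theorem add_X_sq_add_one_mul_mem_monicsOfDegree (hh : h ∈ monicsOfDegree E k)
    (hp : p.natDegree + 3 ≤ k) : h + (X ^ 2 + 1) * p ∈ monicsOfDegree E k := by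
  refine add_mem_monicsOfDegree hh (natDegree_mul_le.trans_lt ?_)
  have hquad : (X ^ 2 + 1 : E[X]).natDegree = 2 := by compute_degree!
  omega

theorem monicSum_charWeight_eq_zero_of_left_ne_zero (hψ : ψ ≠ 1) (hα : α ≠ 0) (hk : 5 ≤ k) :
    monicSum (charWeight χ ψ α β) k = 0 := by
  obtain ⟨s, hs⟩ := AddChar.ne_one_iff.1 hψ
  let p : E[X] := C (-(s / α)) * X ^ (k - 3)
  have hp : p.natDegree + 3 ≤ k := by
    have : p.natDegree ≤ k - 3 := natDegree_C_mul_X_pow_le ..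
    omega
  refine monicSum_eq_zero_of_twist (T := fun h ↦ h + (X ^ 2 + 1) * p)
    (fun h hh ↦ add_X_sq_add_one_mul_mem_monicsOfDegree hh hp) (add_left_injective _).injOn hs
    fun h hh ↦ ?_
  obtain rfl := (mem_monicsOfDegree.1 hh).2
  rw [charWeight_add_X_sq_add_one_mul hk hp, charWeight, resultant_X_right, mul_left_comm,
    ← AddChar.map_add_eq_mul, logDerivAtZero]
  have hplow {i : ℕ} (hi : i < 2) : p.coeff i = 0 := by
    rw [coeff_C_mul_X_pow, if_neg (by omega)]
  have hptop : p.coeff (h.natDegree - 3) = -(s / α) := by simp [p]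
  rw [hplow zero_lt_two, hplow one_lt_two, hptop, add_zero, add_zero]
  congr 2
  field_simp
  ring

theorem monicSum_charWeight_eq_zero_of_right_ne_zero (hψ : ψ ≠ 1) (hβ : β ≠ 0) (hk : 5 ≤ k) :
    monicSum (charWeight χ ψ α β) k = 0 := by
  obtain ⟨s, hs⟩ := AddChar.ne_one_iff.1 hψ
  let p (h : E[X]) : E[X] := C (-(s / β) * h.coeff 0) * X
  have hp (h : E[X]) : (p h).natDegree + 3 ≤ k := by
    have : (p h).natDegree ≤ 1 := (natDegree_C_mul_le ..).trans natDegree_X_le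
    omega
  have hcoeff (h : E[X]) : (h + (X ^ 2 + 1) * p h).coeff 0 = h.coeff 0 := by simp [p]
  refine monicSum_eq_zero_of_twist (T := fun h ↦ h + (X ^ 2 + 1) * p h)
    (fun h hh ↦ add_X_sq_add_one_mul_mem_monicsOfDegree hh (hp h))
    (fun f _ g _ hfg ↦ ?_) hs fun h hh ↦ ?_
  · have h0 : f.coeff 0 = g.coeff 0 := by
      rw [← hcoeff f, ← hcoeff g]
      exact congrArg (coeff · 0) hfg
    simpa [p, h0] using hfg
  obtain rfl := (mem_monicsOfDegree.1 hh).2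
  rcases eq_or_ne (h.coeff 0) 0 with h0 | h0
  · rw [charWeight_of_coeff_zero_eq_zero h0,
      charWeight_of_coeff_zero_eq_zero ((hcoeff h).trans h0), mul_zero]
  rw [charWeight_add_X_sq_add_one_mul hk (hp h), charWeight, resultant_X_right, mul_left_comm,
    ← AddChar.map_add_eq_mul, logDerivAtZero]
  have hp0 : (p h).coeff 0 = 0 := by simp [p]
  have hp1 : (p h).coeff 1 = -(s / β) * h.coeff 0 := by simp [p]
  have hptop : (p h).coeff (h.natDegree - 3) = 0 := by
    simp only [p, coeff_C_mul_X]
    rw [if_neg (by omega)]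
  rw [hp0, hp1, hptop, add_zero, add_zero]
  congr 2
  field_simp
  ring

theorem monicSum_charWeight_zero_zero_eq_zero (hχ : χ ≠ 1) (hk : 5 ≤ k) :
    monicSum (charWeight χ ψ 0 0) k = 0 := by
  obtain ⟨w, hw⟩ := MulChar.ne_one_iff.1 hχ
  let p (h : E[X]) : E[X] := C (((w : E)⁻¹ - 1) * h.coeff 0)
  have hp (h : E[X]) : (p h).natDegree + 3 ≤ k := by
    rw [natDegree_C]
    omega
  have hadd (h : E[X]) : h.coeff 0 + (p h).coeff 0 = (w : E)⁻¹ * h.coeff 0 := by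
    simp only [p, coeff_C_zero]
    ring
  have hcoeff (h : E[X]) : (h + (X ^ 2 + 1) * p h).coeff 0 = (w : E)⁻¹ * h.coeff 0 := by
    rw [← hadd, coeff_add, mul_coeff_zero]
    simp
  refine monicSum_eq_zero_of_twist (T := fun h ↦ h + (X ^ 2 + 1) * p h)
    (fun h hh ↦ add_X_sq_add_one_mul_mem_monicsOfDegree hh (hp h))
    (fun f _ g _ hfg ↦ ?_) hw fun h hh ↦ ?_
  · have h0 : (w : E)⁻¹ * f.coeff 0 = (w : E)⁻¹ * g.coeff 0 := by
      rw [← hcoeff f, ← hcoeff g]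
      exact congrArg (coeff · 0) hfg
    simpa [p, mul_left_cancel₀ (inv_ne_zero w.ne_zero) h0] using hfg
  obtain rfl := (mem_monicsOfDegree.1 hh).2
  rw [charWeight_add_X_sq_add_one_mul hk (hp h), charWeight, resultant_X_right, hadd,
    ← mul_assoc (χ w), ← map_mul]
  simp only [zero_mul, mul_inv, inv_inv]
  congr 2
  ring

theorem monicSum_charWeight_eq_zero (hψ : ψ ≠ 1) (h : χ ≠ 1 ∨ α ≠ 0 ∨ β ≠ 0) (hk : 5 ≤ k) :
    monicSum (charWeight χ ψ α β) k = 0 := by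
  rcases ne_or_eq α 0 with hα | rfl
  · exact monicSum_charWeight_eq_zero_of_left_ne_zero hψ hα hk
  rcases ne_or_eq β 0 with hβ | rfl
  · exact monicSum_charWeight_eq_zero_of_right_ne_zero hψ hβ hk
  exact monicSum_charWeight_zero_zero_eq_zero (by simpa using h) hk

end Twist

end CharacterWeight

section ElementCharpoly

open Finset IntermediateField Polynomial

variable (E : Type*) {K Ω : Type*} [Field E] [Field K] [Algebra E K]

/-- The characteristic polynomial over `E` of an element of the extension `K`, encoded as the power
of the minimal polynomial of degree `[K : E]`. -/
noncomputable def elementCharpoly (x : K) : E[X] := minpoly E x ^ Module.finrank E⟮x⟯ K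

variable {E} [FiniteDimensional E K] [Algebra.IsSeparable E K] [Field Ω] [Algebra E Ω]
  [IsAlgClosed Ω]

variable (Ω) in
theorem map_minpoly_gen_eq_prod_embeddings (pb : PowerBasis E K) :
    (minpoly E pb.gen).map (algebraMap E Ω) = ∏ σ : K →ₐ[E] Ω, (X - C (σ pb.gen)) := by
  classical
  have hsep : (minpoly E pb.gen).Separable := Algebra.IsSeparable.isSeparable E pb.gen
  have hnodup : ((minpoly E pb.gen).aroots Ω).Nodup := nodup_roots hsep.map
  rw [(IsAlgClosed.splits _).eq_prod_roots_of_monic ((minpoly.monic pb.isIntegral_gen).map _),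
    Fintype.prod_equiv pb.liftEquiv' (fun σ ↦ X - C (σ pb.gen)) (fun r ↦ X - C (r : Ω))
      fun σ ↦ by rw [PowerBasis.liftEquiv'_apply_coe],
    prod_mem_multiset _ _ (fun r ↦ X - C r) fun _ ↦ rfl, prod_eq_multiset_prod,
    Multiset.toFinset_val, hnodup.dedup, aroots_def]

variable (Ω) in
theorem map_elementCharpoly (x : K) :
    (elementCharpoly E x).map (algebraMap E Ω) = ∏ σ : K →ₐ[E] Ω, (X - C (σ x)) := by
  classical
  have hx : IsIntegral E x := .of_finite E x
  let pb := adjoin.powerBasis hx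
  have hgen : pb.gen = AdjoinSimple.gen E x := adjoin.powerBasis_gen hx
  have hsep : Algebra.IsSeparable E⟮x⟯ K := Algebra.isSeparable_tower_top_of_isSeparable E E⟮x⟯ K
  have hbase := map_minpoly_gen_eq_prod_embeddings Ω pb
  rw [hgen, minpoly_gen] at hbase
  rw [elementCharpoly, Polynomial.map_pow, hbase, ← prod_pow,
    Fintype.prod_equiv algHomEquivSigma (fun σ : K →ₐ[E] Ω ↦ X - C (σ x))
      (fun σ ↦ X - C (σ.1 (AdjoinSimple.gen E x))) fun σ ↦ rfl,
    ← univ_sigma_univ, prod_sigma]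
  refine prod_congr rfl fun τ _ ↦ ?_
  let : Algebra E⟮x⟯ Ω := τ.toRingHom.toAlgebra
  have hcard : Fintype.card (K →ₐ[E⟮x⟯] Ω) = Module.finrank E⟮x⟯ K := AlgHom.card E⟮x⟯ K Ω
  simp only [prod_const, card_univ, ← hcard]

theorem resultant_elementCharpoly (x : K) (g : E[X]) :
    (elementCharpoly E x).resultant g = Algebra.norm E (aeval x g) := by
  let Ω := AlgebraicClosure E
  apply (algebraMap E Ω).injective
  rw [Algebra.norm_eq_prod_embeddings, ← resultant_map_map,
    ← natDegree_map (f := algebraMap E Ω) (p := elementCharpoly E x), map_elementCharpoly,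
    resultant_prod_left _ _ _ _ (by simp) natDegree_map_le]
  refine prod_congr rfl fun σ _ ↦ ?_
  rw [natDegree_X_sub_C, resultant_X_sub_C_left _ _ _ natDegree_map_le, eval_map_algebraMap,
    aeval_algHom_apply]

theorem nextCoeff_elementCharpoly (x : K) :
    (elementCharpoly E x).nextCoeff = -Algebra.trace E K x := by
  let Ω := AlgebraicClosure E
  have hinj := (algebraMap E Ω).injective
  apply hinj
  rw [map_neg, trace_eq_sum_embeddings, ← nextCoeff_map hinj, map_elementCharpoly,
    Monic.nextCoeff_prod _ _ fun σ _ ↦ monic_X_sub_C _, ← sum_neg_distrib]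
  simp only [nextCoeff_X_sub_C]

theorem logDerivAtZero_elementCharpoly {x : K} (hx : x ≠ 0) :
    logDerivAtZero (elementCharpoly E x) = -Algebra.trace E K x⁻¹ := by
  let Ω := AlgebraicClosure E
  apply (algebraMap E Ω).injective
  have hmap (h : E[X]) :
      algebraMap E Ω (logDerivAtZero h) = logDerivAtZero (h.map (algebraMap E Ω)) := by
    simp [logDerivAtZero]
  rw [map_neg, trace_eq_sum_embeddings, hmap, map_elementCharpoly,
    logDerivAtZero_prod fun σ _ ↦ by simpa using hx, ← sum_neg_distrib]
  refine sum_congr rfl fun σ _ ↦ ?_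
  simp [logDerivAtZero, coeff_C]

variable {χ : MulChar E ℂ} {ψ : AddChar E ℂ} {α β : E}

theorem charWeight_elementCharpoly (x : K) :
    charWeight χ ψ α β (elementCharpoly E x) =
      χ (Algebra.norm E (x + x⁻¹)) * ψ (Algebra.trace E K (α • x + β • x⁻¹)) := by
  have hresX : (elementCharpoly E x).resultant X = Algebra.norm E x := by
    rw [resultant_elementCharpoly, aeval_X]
  rcases eq_or_ne x 0 with rfl | hx
  · rw [charWeight, hresX, Algebra.norm_zero]
    simp [Algebra.norm_zero, MulChar.map_zero]
  have hadd : x + x⁻¹ = aeval x (X ^ 2 + 1 : E[X]) * x⁻¹ := by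
    simp only [map_add, map_pow, map_one, aeval_X]
    field_simp
  rw [charWeight, hresX, resultant_elementCharpoly, nextCoeff_elementCharpoly,
    logDerivAtZero_elementCharpoly hx, hadd, map_mul (Algebra.norm E), Algebra.norm_inv,
    map_add (Algebra.trace E K), map_smul, map_smul]
  congr 2
  simp only [smul_eq_mul]
  ring

end ElementCharpoly

section MinpolyFibres

open Finset IntermediateField Polynomial

variable {E K : Type*} [Field E] [Field K] [Algebra E K]

theorem splits_map_of_natDegree_dvd_finrank [Finite K] {P : E[X]} (hP : Irreducible P)
    (hdvd : P.natDegree ∣ Module.finrank E K) : (P.map (algebraMap E K)).Splits := by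
  have : Finite E := Finite.of_injective _ (algebraMap E K).injective
  have hcard : Nat.card K = Nat.card E ^ Module.finrank E K := Module.natCard_eq_pow_finrank
  have hdvd_map : P.map (algebraMap E K) ∣ X ^ Nat.card K - X := by
    have := Polynomial.map_dvd (algebraMap E K)
      (hP.natDegree_dvd_iff_dvd_X_pow_card_pow_sub_X.1 hdvd)
    rwa [← hcard, Polynomial.map_sub, Polynomial.map_pow, map_X] at this
  exact splits_X_pow_nat_card_sub_X.of_dvd
    (FiniteField.X_pow_card_sub_X_ne_zero K Finite.one_lt_card) hdvd_map

theorem card_filter_minpoly_eq [Fintype K] [DecidableEq E[X]] {P : E[X]} (hP : Irreducible P)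
    (hmonic : P.Monic) (hdvd : P.natDegree ∣ Module.finrank E K) :
    (univ.filter fun x : K ↦ minpoly E x = P).card = P.natDegree := by
  classical
  have : Finite E := Finite.of_injective _ (algebraMap E K).injective
  have hnodup : (P.aroots K).Nodup :=
    nodup_roots (PerfectField.separable_of_irreducible hP).map
  rw [← natDegree_map (algebraMap E K),
    (splits_map_of_natDegree_dvd_finrank hP hdvd).natDegree_eq_card_roots,
    ← Multiset.toFinset_card_of_nodup hnodup]
  congr 1
  ext x
  rw [mem_filter_univ, Multiset.mem_toFinset, mem_aroots, and_iff_right hmonic.ne_zero]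
  constructor
  · rintro rfl
    exact minpoly.aeval E x
  · exact fun h ↦ (minpoly.eq_of_irreducible_of_monic hP h hmonic).symm

theorem mixedCharSum_eq_vonMangoldtSum [Finite E] [Fintype K]
    (χ : MulChar E ℂ) (ψ : AddChar E ℂ) (α β : E) :
    mixedCharSum K χ ψ α β = vonMangoldtSum (charWeight χ ψ α β) (Module.finrank E K) := by
  classical
  have hmaps (x : K) : minpoly E x ∈ irreduciblesOfDegreeDvd E (Module.finrank E K) := by
    have hx : IsIntegral E x := .of_finite E x
    exact mem_irreduciblesOfDegreeDvd.2 ⟨minpoly.monic hx, minpoly.irreducible hx,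
      minpoly.degree_dvd hx, Module.finrank_pos.ne'⟩
  have hterm (x : K) : χ (Algebra.norm E (x + x⁻¹)) * ψ (Algebra.trace E K (α • x + β • x⁻¹)) =
      charWeight χ ψ α β (minpoly E x) ^ (Module.finrank E K / (minpoly E x).natDegree) := by
    have hx : IsIntegral E x := .of_finite E x
    have hfinrank : Module.finrank E K / (minpoly E x).natDegree =
        Module.finrank E⟮x⟯ K := by
      rw [← adjoin.finrank hx,
        ← Module.finrank_mul_finrank E E⟮x⟯ K,
        Nat.mul_div_cancel_left _ Module.finrank_pos]
    rw [← charWeight_elementCharpoly, elementCharpoly, hfinrank,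
      (isMonicMultiplicative_charWeight χ ψ α β).map_pow (minpoly.monic hx)]
  rw [mixedCharSum, vonMangoldtSum, ← sum_fiberwise_of_maps_to fun x _ ↦ hmaps x]
  refine sum_congr rfl fun P hP ↦ ?_
  obtain ⟨hmonic, hirr, hdvd, -⟩ := mem_irreduciblesOfDegreeDvd.1 hP
  rw [sum_congr rfl fun x hx ↦ (hterm x).trans (by rw [(mem_filter.1 hx).2]), sum_const,
    nsmul_eq_mul, card_filter_minpoly_eq hirr hmonic hdvd]

end MinpolyFibres

section PowerSums

open Finset Polynomial

variable {ι 𝕜 : Type*} [Field 𝕜]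

theorem exists_polynomial_eval_eq_zero_iff_ne [Finite ι] (ρ : ι → 𝕜) (i₀ : ι) :
    ∃ P : 𝕜[X], ∀ i, P.eval (ρ i) = 0 ↔ ρ i ≠ ρ i₀ := by
  classical
  have := Fintype.ofFinite ι
  refine ⟨∏ s ∈ (univ.image ρ).erase (ρ i₀), (X - C s), fun i ↦ ?_⟩
  simp only [eval_prod, eval_sub, eval_X, eval_C, prod_eq_zero_iff, mem_erase, sub_eq_zero]
  constructor
  · rintro ⟨s, ⟨hs, -⟩, rfl⟩
    exact hs
  · exact fun hi ↦ ⟨ρ i, ⟨hi, mem_image_of_mem ρ (mem_univ i)⟩, rfl⟩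

theorem sum_coeff_mul_powerSum [Fintype ι] (P : 𝕜[X]) (ρ : ι → 𝕜) (k : ℕ) :
    ∑ j ∈ range (P.natDegree + 1), P.coeff j * ∑ i, ρ i ^ (k + j) =
      ∑ i, P.eval (ρ i) * ρ i ^ k := by
  simp_rw [mul_sum, eval_eq_sum_range, sum_mul]
  rw [sum_comm]
  refine sum_congr rfl fun i _ ↦ sum_congr rfl fun j _ ↦ ?_
  ring

-- A polynomial vanishing at every `ρ i ≠ ρ i₀` isolates `ρ i₀ ^ k` in a fixed linear combination
-- of bounded power sums.
theorem norm_le_one_of_norm_powerSum_le {𝕜 : Type*} [NormedField 𝕜] [CharZero 𝕜] [Fintype ι]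
    {ρ : ι → 𝕜} {B : ℝ} {k₀ : ℕ} (hbound : ∀ k, k₀ ≤ k → ‖∑ i, ρ i ^ k‖ ≤ B) (i₀ : ι) :
    ‖ρ i₀‖ ≤ 1 := by
  classical
  by_contra! hlt
  obtain ⟨P, hP⟩ := exists_polynomial_eval_eq_zero_iff_ne ρ i₀
  let c : 𝕜 := (univ.filter fun i ↦ ρ i = ρ i₀).card * P.eval (ρ i₀)
  have hc : 0 < ‖c‖ := by
    have hcard : (univ.filter fun i ↦ ρ i = ρ i₀).card ≠ 0 := (card_pos.2 ⟨i₀, by simp⟩).ne'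
    exact norm_pos_iff.2 (mul_ne_zero (Nat.cast_ne_zero.2 hcard) ((hP i₀).not.2 (by simp)))
  have hisolate (k : ℕ) :
      ∑ j ∈ range (P.natDegree + 1), P.coeff j * ∑ i, ρ i ^ (k + j) = c * ρ i₀ ^ k := by
    have hterm (i : ι) : P.eval (ρ i) * ρ i ^ k =
        if ρ i = ρ i₀ then P.eval (ρ i₀) * ρ i₀ ^ k else 0 := by
      split_ifs with hi
      · rw [hi]
      · rw [(hP i).2 hi, zero_mul]
    rw [sum_coeff_mul_powerSum, sum_congr rfl fun i _ ↦ hterm i, ← sum_filter, sum_const,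
      nsmul_eq_mul, mul_assoc]
  have hupper {k : ℕ} (hk : k₀ ≤ k) :
      ‖c‖ * ‖ρ i₀‖ ^ k ≤ ∑ j ∈ range (P.natDegree + 1), ‖P.coeff j‖ * B := by
    rw [← norm_pow, ← norm_mul, ← hisolate]
    refine norm_sum_le_of_le _ fun j _ ↦ ?_
    rw [norm_mul]
    gcongr
    exact hbound _ (by omega)
  obtain ⟨k, hk⟩ := pow_unbounded_of_one_lt
    ((∑ j ∈ range (P.natDegree + 1), ‖P.coeff j‖ * B) / ‖c‖) hlt
  rw [div_lt_iff₀' hc] at hk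
  refine hk.not_ge (le_trans ?_ (hupper (le_max_right k k₀)))
  gcongr
  · exact hlt.le
  · exact le_max_left k k₀

end PowerSums

section WeilBound

open Finset

variable {E : Type*} [Field E] [Fintype E] {χ : MulChar E ℂ} {ψ : AddChar E ℂ} {α β : E}

theorem exists_norm_vonMangoldtSum_le (hψ : ψ ≠ 1) (h : χ ≠ 1 ∨ α ≠ 0 ∨ β ≠ 0) :
    ∃ (B : ℝ) (k₀ : ℕ), ∀ k, k₀ ≤ k →
      ‖vonMangoldtSum (charWeight χ ψ α β) (2 * k)‖ ≤ B * (Fintype.card E : ℝ) ^ k := by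
  obtain ⟨p, hp⟩ := CharP.exists E
  have : Fact p.Prime := ⟨CharP.char_is_prime E p⟩
  obtain ⟨e, -, he⟩ := FiniteField.card E p
  have hE : 1 < Fintype.card E := Fintype.one_lt_card
  refine ⟨4 * Fintype.card E ^ 3 + 3, (2 * Fintype.card E ^ 3) ^ 2, fun k hk ↦ ?_⟩
  have : NeZero (2 * k) := ⟨mul_ne_zero two_ne_zero (lt_of_lt_of_le (by positivity) hk).ne'⟩
  let K := FiniteField.Extension E p (2 * k)
  let : Fintype K := Fintype.ofFinite K
  have : CharP K p := charP_of_injective_algebraMap (algebraMap E K).injective p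
  have hfinrank : Module.finrank E K = 2 * k := FiniteField.finrank_extension E p (2 * k)
  have hpow : p ^ (e * k : ℕ) = Fintype.card E ^ k := by rw [he, pow_mul]
  have hcard : Fintype.card K = (p ^ (e * k : ℕ)) ^ 2 := by
    rw [Module.card_eq_pow_finrank (K := E), hfinrank, hpow, ← pow_mul, mul_comm 2 k]
  have hlarge : (2 * Fintype.card E ^ 3) ^ 2 < p ^ (e * k : ℕ) :=
    hk.trans_lt (hpow ▸ Nat.lt_pow_self hE)
  have hmixed := norm_mixedCharSum_le (K := K) hcard hlarge hψ h
  rw [mixedCharSum_eq_vonMangoldtSum, hfinrank] at hmixed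
  have hone : (1 : ℝ) ≤ (Fintype.card E : ℝ) ^ k := one_le_pow₀ (by exact_mod_cast hE.le)
  have hpow_cast : (p : ℝ) ^ (e * k : ℕ) = (Fintype.card E : ℝ) ^ k := by exact_mod_cast hpow
  rw [hpow_cast] at hmixed
  linarith

theorem norm_sum_mulChar_mul_addChar_le (hψ : ψ ≠ 1) (h : χ ≠ 1 ∨ α ≠ 0 ∨ β ≠ 0) :
    ‖∑ x : E, χ (x + x⁻¹) * ψ (α * x + β * x⁻¹)‖ ≤ 4 * √(Fintype.card E) := by
  obtain ⟨ω, hω⟩ := (isMonicMultiplicative_charWeight χ ψ α β).exists_vonMangoldtSum_eq (n := 4)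
    fun k hk ↦ monicSum_charWeight_eq_zero hψ h hk
  obtain ⟨B, k₀, hB⟩ := exists_norm_vonMangoldtSum_le hψ h
  have hE : 0 < (Fintype.card E : ℝ) := by exact_mod_cast Fintype.card_pos
  have hbound (k : ℕ) (hk : max k₀ 1 ≤ k) : ‖∑ i, (ω i ^ 2 / Fintype.card E) ^ k‖ ≤ B := by
    have hsum : ∑ i, (ω i ^ 2 / Fintype.card E) ^ k =
        (∑ i, ω i ^ (2 * k)) / (Fintype.card E : ℂ) ^ k := by
      simp_rw [sum_div, div_pow, pow_mul]
    have hk_bound := hB k (le_of_max_le_left hk)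
    rwa [hω _ (by omega), norm_neg, ← div_le_iff₀ (by positivity), ← Complex.norm_natCast,
      ← norm_pow, ← norm_div, ← hsum] at hk_bound
  have hroot (i : Fin 4) : ‖ω i‖ ≤ √(Fintype.card E) := by
    have hle := norm_le_one_of_norm_powerSum_le hbound i
    rw [norm_div, norm_pow, Complex.norm_natCast, div_le_one hE] at hle
    exact Real.le_sqrt_of_sq_le hle
  have hsum : ∑ x : E, χ (x + x⁻¹) * ψ (α * x + β * x⁻¹) = -∑ i, ω i := by
    have hself := mixedCharSum_eq_vonMangoldtSum (K := E) χ ψ α β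
    rw [Module.finrank_self, hω 1 one_ne_zero] at hself
    simpa [mixedCharSum, Algebra.norm_self, Algebra.trace_self] using hself
  calc ‖∑ x : E, χ (x + x⁻¹) * ψ (α * x + β * x⁻¹)‖ = ‖∑ i, ω i‖ := by rw [hsum, norm_neg]
    _ ≤ ∑ _i : Fin 4, √(Fintype.card E) := norm_sum_le_of_le _ fun i _ ↦ hroot i
    _ = 4 * √(Fintype.card E) := by simp

end WeilBound

section PrimeFactorCount

open Finset

theorem pow_card_primeFactors_mul_primorial_le {M : ℕ} (hM : M ≠ 0) (c : ℕ) :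
    c ^ M.primeFactors.card * primorial c ≤ c ^ Nat.primeCounting c * M := by
  let S := M.primeFactors
  let A := (range (c + 1)).filter Nat.Prime
  have hA : A.card = Nat.primeCounting c := (Nat.count_eq_card_filter_range _ _).symm
  have hlarge : c ^ (S \ A).card ≤ ∏ l ∈ S \ A, l := by
    refine pow_card_le_prod _ _ _ fun l hl ↦ ?_
    obtain ⟨hlS, hlA⟩ := mem_sdiff.1 hl
    have hlc : c < l := by simpa [A, Nat.prime_of_mem_primeFactors hlS] using hlA
    exact hlc.le
  have hsmall : ∏ l ∈ A \ S, l ≤ c ^ (A \ S).card := by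
    refine prod_le_pow_card _ _ _ fun l hl ↦ ?_
    exact mem_range_succ_iff.1 (mem_filter.1 (mem_sdiff.1 hl).1).1
  calc c ^ S.card * primorial c
      = c ^ (S ∩ A).card * (∏ l ∈ A ∩ S, l) * (c ^ (S \ A).card * ∏ l ∈ A \ S, l) := by
        rw [← card_inter_add_card_sdiff S A, pow_add,
          show primorial c = (∏ l ∈ A ∩ S, l) * ∏ l ∈ A \ S, l from
            (prod_inter_mul_prod_sdiff A S _).symm]
        ring
    _ ≤ c ^ (S ∩ A).card * (∏ l ∈ A ∩ S, l) * ((∏ l ∈ S \ A, l) * c ^ (A \ S).card) := by gcongr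
    _ = c ^ Nat.primeCounting c * ∏ l ∈ S, l := by
        rw [← hA, ← card_inter_add_card_sdiff A S, pow_add, ← prod_inter_mul_prod_sdiff S A,
          inter_comm]
        ring
    _ ≤ c ^ Nat.primeCounting c * M := by
        gcongr
        exact Nat.le_of_dvd (Nat.pos_of_ne_zero hM) (Nat.prod_primeFactors_dvd M)

theorem sixteen_pow_card_primeFactors_mul_le {M : ℕ} (hM : M ≠ 0) :
    16 ^ M.primeFactors.card * 30030 ≤ 16 ^ 6 * M := by
  have hprimorial : primorial 16 = 30030 := by decide
  have hcount : Nat.primeCounting 16 = 6 := by decide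
  simpa only [hprimorial, hcount] using pow_card_primeFactors_mul_primorial_le hM 16

theorem sixteen_pow_card_primeFactors_two_pow_sub_one_mul_le {n : ℕ} (hn : n ≠ 0) :
    16 * 16 ^ (2 ^ n - 1).primeFactors.card * 30030 ≤ 16 ^ 6 * (2 * (2 ^ n - 1)) := by
  have htwo : 2 ∣ 2 ^ n := dvd_pow_self 2 hn
  have hpos : 0 < 2 ^ n := by positivity
  have hcoprime : Nat.Coprime 2 (2 ^ n - 1) :=
    (Nat.Prime.coprime_iff_not_dvd Nat.prime_two).2 (by omega)
  have hbound := sixteen_pow_card_primeFactors_mul_le (M := 2 * (2 ^ n - 1)) (by omega)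
  rwa [hcoprime.primeFactors_mul, card_union_of_disjoint hcoprime.disjoint_primeFactors,
    Nat.prime_two.primeFactors, card_singleton, pow_add, pow_one] at hbound

variable {q n : ℕ}

-- For `q = 2` the prime `2` does not divide `q ^ n - 1`, which saves a factor of `8`.
theorem pow_card_primeFactors_pow_sub_one_le (hq : 2 ≤ q) (hn : 25 ≤ n) :
    256 * 16 ^ (q ^ n - 1).primeFactors.card ≤ q ^ (n - 8) * q ^ n := by
  have hqn : 1 < q ^ n := Nat.one_lt_pow (by omega) (by omega)
  rcases hq.eq_or_lt with rfl | hq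
  · have hfactor : 2 ^ 17 * 2 ^ n ≤ 2 ^ (n - 8) * 2 ^ n :=
      Nat.mul_le_mul_right _ (Nat.pow_le_pow_right two_pos (by omega))
    have hbound := sixteen_pow_card_primeFactors_two_pow_sub_one_mul_le (n := n) (by omega)
    generalize 2 ^ (n - 8) * 2 ^ n = z at hfactor ⊢
    omega
  · have hfactor : 3 ^ 17 * q ^ n ≤ q ^ (n - 8) * q ^ n :=
      Nat.mul_le_mul_right _
        ((Nat.pow_le_pow_left hq 17).trans (Nat.pow_le_pow_right (by omega) (by omega)))
    have hbound := sixteen_pow_card_primeFactors_mul_le (M := q ^ n - 1) (by omega)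
    omega

theorem four_mul_two_pow_card_primeFactors_mul_sq_le_sqrt (hq : 2 ≤ q) (hn : 25 ≤ n) :
    4 * 2 ^ (q ^ n - 1).primeFactors.card * (q : ℝ) ^ 2 ≤ √((q ^ n : ℕ) : ℝ) := by
  let w := (q ^ n - 1).primeFactors.card
  have hsq : (16 * (2 ^ w) ^ 2 * q ^ 4) ^ 2 ≤ (q ^ n) ^ 2 :=
    calc (16 * (2 ^ w) ^ 2 * q ^ 4) ^ 2 = 256 * 16 ^ w * q ^ 8 := by
          rw [show 16 = 2 ^ 4 by rfl, ← pow_mul 2 4 w]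
          ring
      _ ≤ q ^ (n - 8) * q ^ n * q ^ 8 :=
          Nat.mul_le_mul_right _ (pow_card_primeFactors_pow_sub_one_le hq hn)
      _ = q ^ (n - 8) * q ^ 8 * q ^ n := by ring
      _ = (q ^ n) ^ 2 := by rw [← pow_add, Nat.sub_add_cancel (by omega), sq]
  have hle : 16 * (2 ^ w) ^ 2 * (q : ℝ) ^ 4 ≤ ((q ^ n : ℕ) : ℝ) := by
    exact_mod_cast (Nat.pow_le_pow_iff_left two_ne_zero).1 hsq
  refine Real.le_sqrt_of_sq_le (le_of_eq_of_le ?_ hle)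
  ring

end PrimeFactorCount

section OrderWeight

open Finset ArithmeticFunction

/-- Vinogradov's weight `μ(d) / φ(d)`. Summed over a cyclic group of characters, with `d` the order
of the character, it detects generators of the dual group. -/
noncomputable def orderWeight (d : ℕ) : ℂ := moebius d / d.totient

theorem orderWeight_one : orderWeight 1 = 1 := by simp [orderWeight]

theorem orderWeight_eq_zero_of_not_squarefree {d : ℕ} (hd : ¬Squarefree d) :
    orderWeight d = 0 := by
  simp [orderWeight, moebius_eq_zero_of_not_squarefree hd]

theorem orderWeight_add_mul_orderWeight_mul_prime {d l : ℕ} (hl : l.Prime) (hd : ¬l ∣ d) :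
    orderWeight d + (l - 1) * orderWeight (d * l) = 0 := by
  have hcoprime : d.Coprime l := ((Nat.Prime.coprime_iff_not_dvd hl).2 hd).symm
  have hl_ne : (l : ℂ) - 1 ≠ 0 := sub_ne_zero.2 (by exact_mod_cast hl.one_lt.ne')
  rw [orderWeight, orderWeight, isMultiplicative_moebius.map_mul_of_coprime hcoprime,
    moebius_apply_prime hl, Nat.totient_mul hcoprime, Nat.totient_prime hl]
  push_cast [Nat.cast_sub hl.one_le]
  rw [mul_neg_one, ← div_div, mul_div_cancel₀ _ hl_ne, neg_div, add_neg_cancel]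

theorem sum_divisors_abs_moebius {N : ℕ} (hN : N ≠ 0) :
    ∑ d ∈ N.divisors, |moebius d| = 2 ^ N.primeFactors.card := by
  simp only [abs_moebius]
  rw [← sum_filter, Nat.sum_divisors_filter_squarefree hN, sum_const, card_powerset,
    Nat.factors_eq, nsmul_one]
  simp

variable {G : Type*}

theorem sum_norm_orderWeight_orderOf [Group G] [IsCyclic G] [Fintype G] :
    ∑ g : G, ‖orderWeight (orderOf g)‖ = 2 ^ (Fintype.card G).primeFactors.card := by
  have hmaps : ∀ g ∈ (univ : Finset G), orderOf g ∈ (Fintype.card G).divisors := fun g _ ↦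
    Nat.mem_divisors.2 ⟨orderOf_dvd_card, Fintype.card_ne_zero⟩
  have hfibre (d) (hd : d ∈ (Fintype.card G).divisors) :
      ∑ g : G with orderOf g = d, ‖orderWeight (orderOf g)‖ = (|moebius d| : ℤ) := by
    have hd_dvd := Nat.dvd_of_mem_divisors hd
    have htotient : (d.totient : ℝ) ≠ 0 :=
      Nat.cast_ne_zero.2 (Nat.totient_pos.2 (Nat.pos_of_mem_divisors hd)).ne'
    rw [sum_congr rfl fun g hg ↦ by rw [(mem_filter.1 hg).2], sum_const,
      IsCyclic.card_orderOf_eq_totient hd_dvd, nsmul_eq_mul, orderWeight, norm_div,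
      Complex.norm_natCast, Complex.norm_intCast, mul_div_cancel₀ _ htotient, Int.cast_abs]
  rw [← sum_fiberwise_of_maps_to hmaps, sum_congr rfl hfibre, ← Int.cast_sum,
    sum_divisors_abs_moebius Fintype.card_ne_zero]
  norm_cast

variable [CommGroup G] {l : ℕ}

theorem orderOf_mul_eq_mul_prime_of_pow_eq_one (hl : l.Prime) {g h : G} (hg : ¬l ∣ orderOf g)
    (hh : h ^ l = 1) (hh_ne : h ≠ 1) : orderOf (g * h) = orderOf g * l := by
  have : Fact l.Prime := ⟨hl⟩
  have horder : orderOf h = l := orderOf_eq_prime hh hh_ne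
  rw [(Commute.all g h).orderOf_mul_eq_mul_orderOf_of_coprime, horder]
  rw [horder]
  exact ((Nat.Prime.coprime_iff_not_dvd hl).2 hg).symm

-- If `orderOf g = l * m` with `l ∤ m`, then `g` is the product of its `l`-part, a power of
-- `g ^ m`, and an element of order dividing `m`.
theorem exists_pow_eq_one_not_dvd_orderOf_mul (hl : l.Prime) {g : G}
    (hg : Squarefree (orderOf g)) : ∃ h : G, h ^ l = 1 ∧ ¬l ∣ orderOf (g * h) := by
  by_cases hdvd : l ∣ orderOf g
  swap
  · exact ⟨1, one_pow l, by rwa [mul_one]⟩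
  obtain ⟨m, hm⟩ := hdvd
  have hcoprime : l.Coprime m := Nat.coprime_of_squarefree_mul (hm ▸ hg)
  have hbezout : (1 : ℤ) = l * l.gcdA m + m * l.gcdB m := by
    rw [← Nat.gcd_eq_gcd_ab, hcoprime.gcd_eq_one, Nat.cast_one]
  have hpow : g ^ ((l : ℤ) * m) = 1 := by
    rw [← Nat.cast_mul, ← hm, zpow_natCast, pow_orderOf_eq_one]
  refine ⟨g ^ (-(m * l.gcdB m) : ℤ), ?_, fun hl_dvd ↦ ?_⟩
  · rw [← zpow_natCast, ← zpow_mul, show -(m * l.gcdB m) * (l : ℤ) = l * m * -l.gcdB m by ring,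
      zpow_mul, hpow, one_zpow]
  · have hproduct : g * g ^ (-(m * l.gcdB m) : ℤ) = g ^ (l * l.gcdA m : ℤ) := by
      rw [← zpow_one_add]
      congr 1
      linarith
    rw [hproduct] at hl_dvd
    have horder : orderOf (g ^ (l * l.gcdA m : ℤ)) ∣ m := by
      rw [orderOf_dvd_iff_pow_eq_one, ← zpow_natCast, ← zpow_mul,
        show (l * l.gcdA m * m : ℤ) = l * m * l.gcdA m by ring, zpow_mul, hpow, one_zpow]
    exact (Nat.Prime.coprime_iff_not_dvd hl).1 hcoprime (hl_dvd.trans horder)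

theorem sum_orderWeight_orderOf_mul_eq_zero [DecidableEq G] [Fintype G] [IsCyclic G]
    (hl : l.Prime) (hcard : l ∣ Nat.card G) (g : G) :
    ∑ h : G with h ^ l = 1, orderWeight (orderOf (g * h)) = 0 := by
  by_cases hsq : ∃ h₀ : G, h₀ ^ l = 1 ∧ ¬l ∣ orderOf (g * h₀)
  swap
  · refine sum_eq_zero fun h hh ↦ orderWeight_eq_zero_of_not_squarefree fun hsq_gh ↦ hsq ?_
    obtain ⟨k, hk, hk_dvd⟩ := exists_pow_eq_one_not_dvd_orderOf_mul hl hsq_gh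
    exact ⟨h * k, by rw [mul_pow, (mem_filter.1 hh).2, hk, one_mul], by rwa [← mul_assoc]⟩
  obtain ⟨h₀, hh₀, hdvd⟩ := hsq
  have htranslate : ∑ h : G with h ^ l = 1, orderWeight (orderOf (g * h)) =
      ∑ h : G with h ^ l = 1, orderWeight (orderOf (g * h₀ * h)) := by
    refine (sum_equiv (Equiv.mulLeft h₀) (fun h ↦ ?_) fun h _ ↦ ?_).symm
    · simp [mul_pow, hh₀]
    · rw [Equiv.coe_mulLeft, mul_assoc]
  have htorsion : (univ.filter fun h : G ↦ h ^ l = 1).card = l := by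
    rw [← Fintype.card_subtype, ← Nat.card_eq_fintype_card]
    exact (IsCyclic.card_powMonoidHom_ker G l).trans (Nat.gcd_eq_right hcard)
  have hone : (1 : G) ∈ univ.filter fun h : G ↦ h ^ l = 1 := by simp
  have hrest (h) (hh : h ∈ (univ.filter fun h : G ↦ h ^ l = 1).erase 1) :
      orderWeight (orderOf (g * h₀ * h)) = orderWeight (orderOf (g * h₀) * l) := by
    obtain ⟨hh_ne, hh⟩ := mem_erase.1 hh
    rw [orderOf_mul_eq_mul_prime_of_pow_eq_one hl hdvd (mem_filter.1 hh).2 hh_ne]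
  rw [htranslate, ← add_sum_erase _ _ hone, sum_congr rfl hrest, sum_const, mul_one,
    card_erase_of_mem hone, htorsion, nsmul_eq_mul, Nat.cast_pred hl.pos,
    orderWeight_add_mul_orderWeight_mul_prime hl hdvd]

theorem sum_orderWeight_orderOf_mul_apply_eq_zero [Fintype G] [IsCyclic G] (hl : l.Prime)
    (hcard : l ∣ Nat.card G) {f : G → ℂ} (hf : ∀ g h, h ^ l = 1 → f (g * h) = f g) :
    ∑ g, orderWeight (orderOf g) * f g = 0 := by
  classical
  let H := univ.filter fun h : G ↦ h ^ l = 1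
  have hH : H.card ≠ 0 := card_ne_zero_of_mem (mem_filter.2 ⟨mem_univ 1, one_pow l⟩)
  have htranslate (h) (hh : h ∈ H) : ∑ g, orderWeight (orderOf g) * f g =
      ∑ g, orderWeight (orderOf (g * h)) * f g := by
    rw [← Equiv.sum_comp (Equiv.mulRight h)]
    refine sum_congr rfl fun g _ ↦ ?_
    rw [Equiv.coe_mulRight, hf g h (mem_filter.1 hh).2]
  have hzero : H.card • ∑ g, orderWeight (orderOf g) * f g = 0 :=
    calc H.card • ∑ g, orderWeight (orderOf g) * f g
        = ∑ h ∈ H, ∑ g, orderWeight (orderOf (g * h)) * f g := by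
          rw [← sum_congr rfl htranslate, sum_const]
      _ = ∑ g, (∑ h ∈ H, orderWeight (orderOf (g * h))) * f g := by
          rw [sum_comm]
          simp only [sum_mul]
      _ = 0 := sum_eq_zero fun g _ ↦ by
          rw [sum_orderWeight_orderOf_mul_eq_zero hl hcard, zero_mul]
  exact (smul_eq_zero.1 hzero).resolve_left hH

theorem exists_prime_exists_pow_eq_of_orderOf_ne_card [Finite G] [IsCyclic G] {g : G}
    (hg : orderOf g ≠ Nat.card G) : ∃ l, l.Prime ∧ l ∣ Nat.card G ∧ ∃ y : G, y ^ l = g := by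
  contrapose! hg
  refine orderOf_eq_of_pow_and_pow_div_prime Nat.card_pos pow_card_eq_one'
    fun l hl hdvd hpow ↦ ?_
  obtain ⟨y, hy⟩ := exists_pow_eq_of_pow_eq_one (Nat.mul_div_cancel' hdvd).symm hpow
  exact hg l hl hdvd y hy

end OrderWeight

section CharacterSieve

open Finset

variable {E : Type*} [Field E]

instance isCyclic_mulChar [Finite E] : IsCyclic (MulChar E ℂ) :=
  let e := (MulChar.mulEquiv_units E ℂ).some
  isCyclic_of_surjective e.symm e.symm.surjective

variable [Fintype E]

theorem natCard_mulChar : Nat.card (MulChar E ℂ) = Fintype.card E - 1 := by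
  rw [MulChar.card_eq_card_units_of_hasEnoughRootsOfUnity, Nat.card_units,
    Nat.card_eq_fintype_card]

theorem sum_norm_orderWeight_mulChar [Fintype (MulChar E ℂ)] :
    ∑ χ : MulChar E ℂ, ‖orderWeight (orderOf χ)‖ = 2 ^ (Fintype.card E - 1).primeFactors.card := by
  rw [sum_norm_orderWeight_orderOf, ← Nat.card_eq_fintype_card, natCard_mulChar]

theorem sum_orderWeight_mul_mulChar_eq_zero [Fintype (MulChar E ℂ)] {γ : E}
    (hγ : orderOf γ ≠ Fintype.card E - 1) :
    ∑ χ : MulChar E ℂ, orderWeight (orderOf χ) * χ γ = 0 := by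
  rcases eq_or_ne γ 0 with rfl | hγ_ne
  · exact sum_eq_zero fun χ _ ↦ by rw [MulChar.map_zero, mul_zero]
  obtain ⟨u, rfl⟩ := isUnit_iff_ne_zero.2 hγ_ne
  have hunits : Nat.card Eˣ = Fintype.card E - 1 := by
    rw [Nat.card_units, Nat.card_eq_fintype_card]
  obtain ⟨l, hl, hdvd, y, rfl⟩ := exists_prime_exists_pow_eq_of_orderOf_ne_card (g := u) <| by
    rwa [hunits, ← orderOf_units]
  refine sum_orderWeight_orderOf_mul_apply_eq_zero hl ?_ fun χ η hη ↦ ?_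
  · rwa [natCard_mulChar, ← hunits]
  · rw [MulChar.mul_apply, Units.val_pow_eq_pow_val, map_pow η, ← MulChar.pow_apply_coe, hη,
      MulChar.one_apply_coe, mul_one]

end CharacterSieve

section TraceSieve

open Finset

theorem norm_apply_le_of_sum_mul_eq_zero {ι R : Type*} [Fintype ι] [NormedRing R] [NormMulClass R]
    {c s : ι → R} {i₀ : ι} {B : ℝ} (hc : c i₀ = 1) (hsum : ∑ i, c i * s i = 0)
    (hs : ∀ i, i ≠ i₀ → ‖s i‖ ≤ B) : ‖s i₀‖ ≤ (∑ i, ‖c i‖ - ‖c i₀‖) * B := by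
  classical
  have hs_eq : s i₀ = -∑ i ∈ univ.erase i₀, c i * s i := by
    rw [eq_neg_iff_add_eq_zero, ← hsum, ← add_sum_erase _ _ (mem_univ i₀), hc, one_mul]
  calc ‖s i₀‖ = ‖∑ i ∈ univ.erase i₀, c i * s i‖ := by rw [hs_eq, norm_neg]
    _ ≤ ∑ i ∈ univ.erase i₀, ‖c i‖ * B := norm_sum_le_of_le _ fun i hi ↦ by
        rw [norm_mul]
        exact mul_le_mul_of_nonneg_left (hs i (ne_of_mem_erase hi)) (norm_nonneg _)
    _ = (∑ i, ‖c i‖ - ‖c i₀‖) * B := by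
        rw [← sum_mul, ← add_sum_erase _ _ (mem_univ i₀), add_sub_cancel_left]

variable {F E : Type*} [Field E] [Fintype E]

theorem card_sub_three_le_norm_sum_one_add_inv :
    (Fintype.card E : ℝ) - 3 ≤ ‖∑ x : E, (1 : MulChar E ℂ) (x + x⁻¹)‖ := by
  classical
  have hsum : ∑ x : E, (1 : MulChar E ℂ) (x + x⁻¹) =
      (univ.filter fun x : E ↦ x + x⁻¹ ≠ 0).card := by
    rw [card_filter, Nat.cast_sum]
    refine sum_congr rfl fun x _ ↦ ?_
    split_ifs with hx
    · rw [MulChar.one_apply (isUnit_iff_ne_zero.2 hx), Nat.cast_one]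
    · rw [not_not.1 hx, MulChar.map_zero, Nat.cast_zero]
  rw [hsum, Complex.norm_natCast, sub_le_iff_le_add]
  exact_mod_cast card_le_card_filter_add_inv_ne_zero_add_three (K := E)

variable [Field F]

theorem compAddMonoidHom_trace_ne_one {L : Type*} [Field L] [Algebra F L] [FiniteDimensional F L]
    [Algebra.IsSeparable F L] {ψ : AddChar F ℂ} (hψ : ψ ≠ 1) :
    ψ.compAddMonoidHom (Algebra.trace F L).toAddMonoidHom ≠ 1 := by
  obtain ⟨t, ht⟩ := AddChar.ne_one_iff.1 hψ
  obtain ⟨x, rfl⟩ := Algebra.trace_surjective F L t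
  exact AddChar.ne_one_iff.2 ⟨x, ht⟩

theorem sum_norm_orderWeight_mul_addChar [Fintype F] [Fintype (MulChar E ℂ)] (ψ : AddChar F ℂ)
    (a b : F) :
    ∑ i : MulChar E ℂ × F × F, ‖orderWeight (orderOf i.1) * ψ (-(i.2.1 * a) - i.2.2 * b)‖ =
      2 ^ (Fintype.card E - 1).primeFactors.card * (Fintype.card F : ℝ) ^ 2 := by
  simp only [norm_mul, AddChar.norm_apply, mul_one]
  rw [Fintype.sum_prod_type, ← sum_norm_orderWeight_mulChar, sum_mul]
  refine sum_congr rfl fun χ _ ↦ ?_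
  simp only [sum_const, card_univ, Fintype.card_prod, nsmul_eq_mul, Nat.cast_mul]
  ring

variable [Algebra F E]

theorem norm_sum_mulChar_mul_addChar_trace_le [Finite F] {ψ : AddChar F ℂ} (hψ : ψ ≠ 1)
    {i : MulChar E ℂ × F × F} (hi : i ≠ (1, 0, 0)) :
    ‖∑ x : E, i.1 (x + x⁻¹) * ψ (Algebra.trace F E (i.2.1 • x + i.2.2 • x⁻¹))‖ ≤
      4 * √(Fintype.card E) := by
  obtain ⟨χ, u, v⟩ := i
  have hne : χ ≠ 1 ∨ algebraMap F E u ≠ 0 ∨ algebraMap F E v ≠ 0 := by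
    contrapose! hi
    simpa using hi
  simpa only [← Algebra.smul_def, AddChar.compAddMonoidHom_apply,
    LinearMap.toAddMonoidHom_coe] using
    norm_sum_mulChar_mul_addChar_le (compAddMonoidHom_trace_ne_one (L := E) hψ) hne

variable [Fintype F]

theorem sum_mul_sum_mul_addChar_trace_eq {J : Type*} [Fintype J] (c : J → ℂ) (f : J → E → ℂ)
    (ψ : AddChar F ℂ) (a b : F) :
    ∑ i : J × F × F, c i.1 * ψ (-(i.2.1 * a) - i.2.2 * b) *
        ∑ x : E, f i.1 x * ψ (Algebra.trace F E (i.2.1 • x + i.2.2 • x⁻¹)) =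
      ∑ x : E, (∑ j, c j * f j x) * ((∑ u, ψ (u * (Algebra.trace F E x - a))) *
        ∑ v, ψ (v * (Algebra.trace F E x⁻¹ - b))) := by
  simp only [mul_sum (s := (univ : Finset E))]
  rw [sum_comm]
  refine sum_congr rfl fun x _ ↦ ?_
  rw [Fintype.sum_mul_sum, ← Fintype.sum_prod_type', Fintype.sum_mul_sum, ← Fintype.sum_prod_type']
  refine sum_congr rfl fun i _ ↦ ?_
  rw [← AddChar.map_add_eq_mul, mul_mul_mul_comm, ← AddChar.map_add_eq_mul,
    map_add (Algebra.trace F E), map_smul, map_smul, smul_eq_mul, smul_eq_mul]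
  congr 2
  ring

theorem sum_orderWeight_mul_sum_eq_zero [Fintype (MulChar E ℂ)] {ψ : AddChar F ℂ}
    (hψ : ψ.IsPrimitive) {a b : F}
    (hnone : ∀ ξ : E, ξ ≠ 0 → Algebra.trace F E ξ = a → Algebra.trace F E ξ⁻¹ = b →
      orderOf (ξ + ξ⁻¹) ≠ Fintype.card E - 1) :
    ∑ i : MulChar E ℂ × F × F, orderWeight (orderOf i.1) * ψ (-(i.2.1 * a) - i.2.2 * b) *
      ∑ x : E, i.1 (x + x⁻¹) * ψ (Algebra.trace F E (i.2.1 • x + i.2.2 • x⁻¹)) = 0 := by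
  classical
  rw [sum_mul_sum_mul_addChar_trace_eq (fun χ : MulChar E ℂ ↦ orderWeight (orderOf χ))
    (fun χ x ↦ χ (x + x⁻¹))]
  refine sum_eq_zero fun x _ ↦ ?_
  rw [AddChar.sum_mulShift _ hψ, AddChar.sum_mulShift _ hψ]
  rcases ne_or_eq (Algebra.trace F E x) a with ha | ha
  · rw [if_neg (sub_ne_zero.2 ha), Nat.cast_zero, zero_mul, mul_zero]
  rcases ne_or_eq (Algebra.trace F E x⁻¹) b with hb | hb
  · rw [if_neg (sub_ne_zero.2 hb), Nat.cast_zero, mul_zero, mul_zero]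
  rcases eq_or_ne x 0 with rfl | hx
  · rw [inv_zero, add_zero, sum_eq_zero fun χ _ ↦ by rw [MulChar.map_zero, mul_zero], zero_mul]
  · rw [sum_orderWeight_mul_mulChar_eq_zero (hnone x hx ha hb), zero_mul]

theorem exists_trace_eq_trace_inv_eq_orderOf_add_inv_eq
    (hcard : 4 * 2 ^ (Fintype.card E - 1).primeFactors.card * (Fintype.card F : ℝ) ^ 2 ≤
      √(Fintype.card E)) (a b : F) :
    ∃ ξ : E, ξ ≠ 0 ∧ Algebra.trace F E ξ = a ∧ Algebra.trace F E ξ⁻¹ = b ∧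
      orderOf (ξ + ξ⁻¹) = Fintype.card E - 1 := by
  have : Fintype (MulChar E ℂ) := Fintype.ofFinite _
  by_contra! hnone
  let ψ := AddChar.FiniteField.primitiveChar_to_Complex F
  have hψ : ψ.IsPrimitive := AddChar.FiniteField.primitiveChar_to_Complex_isPrimitive F
  have hψ_ne : ψ ≠ 1 := by
    simpa using hψ one_ne_zero
  have hupper := norm_apply_le_of_sum_mul_eq_zero (i₀ := ((1 : MulChar E ℂ), (0 : F), (0 : F)))
    (by simp [orderWeight_one]) (sum_orderWeight_mul_sum_eq_zero hψ hnone)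
    fun i hi ↦ norm_sum_mulChar_mul_addChar_trace_le hψ_ne hi
  rw [sum_norm_orderWeight_mul_addChar] at hupper
  simp only [orderOf_one, orderWeight_one, zero_mul, neg_zero, sub_zero, AddChar.map_zero_eq_one,
    mul_one, norm_one, zero_smul, add_zero, map_zero] at hupper
  have hlower := card_sub_three_le_norm_sum_one_add_inv (E := E)
  have hsqrt : 1 ≤ √(Fintype.card E : ℝ) :=
    Real.one_le_sqrt.2 (Nat.one_le_cast.2 Fintype.card_pos)
  have hsq : √(Fintype.card E : ℝ) * √(Fintype.card E) = Fintype.card E :=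
    Real.mul_self_sqrt (Nat.cast_nonneg _)
  linarith [mul_le_mul_of_nonneg_right hcard (zero_le_one.trans hsqrt)]

end TraceSieve

/-- For every prime power `q` and every `n ≥ 25`, and all `a, b ∈ F_q`, there is a
nonzero `ξ ∈ F_{q^n}` with `Tr ξ = a`, `Tr ξ⁻¹ = b` and `ξ + ξ⁻¹` primitive. -/
theorem stmt9 (q n : ℕ) (hq : IsPrimePow q) (hn : 25 ≤ n)
    (F E : Type*) [Field F] [Fintype F] [Field E] [Fintype E] [Algebra F E]
    (hF : Fintype.card F = q) (hE : Fintype.card E = q ^ n) (a b : F) :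
    ∃ ξ : E, ξ ≠ 0 ∧ Algebra.trace F E ξ = a ∧ Algebra.trace F E ξ⁻¹ = b ∧
      orderOf (ξ + ξ⁻¹) = q ^ n - 1 := by
  have hcard := four_mul_two_pow_card_primeFactors_mul_sq_le_sqrt hq.two_le hn
  rw [← hE] at hcard ⊢
  rw [← hF] at hcard
  exact exists_trace_eq_trace_inv_eq_orderOf_add_inv_eq hcard a b
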